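/- Let 1 < p < 3 and q > 1. Let F ∈ C¹(ℝ) be nonnegative with F(0) = F′(0) = 0, and suppose there exists δ₀ ∈ (0,1) such that F(u) ≥ δ₀ (ln(1/|u|))^{1−p} |u| for all 0 < |u| < δ₀ and F(u) ≥ δ₀ |u|^q for all |u| > 1/δ₀. Let τ₀ > 0 and let u₁ : [0,∞) → ℝ be a continuous, nonnegative, compactly supported function with u₁(λ) ≥ 1 for all λ ∈ [τ₀, 3τ₀]. Then for every ε > 0 there is no continuous function u : [0,∞) × [0,∞) → ℝ satisfying the integral equation u(t,r) = ε I(t,r,u₁) + ∫_0^t I(t−τ, r, F∘u(τ,·)) dτ for all t ≥ 0 and r > 0; i.e., the solution blows up in finite time. -/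

import Mathlib

open MeasureTheory intervalIntegral

/-- The radial form, at geodesic radius `r` and time `t`, of the solution of the shifted
wave equation on the hyperbolic plane with data `u(0) = 0`, `∂ₜu(0) = φ`. -/
noncomputable def Isol (t r : ℝ) (φ : ℝ → ℝ) : ℝ :=
  (1 / (Real.pi * Real.sqrt 2)) *
    ∫ s in (0 : ℝ)..t, ∫ l in |r - s|..(r + s),
      φ l * Real.sinh l * Real.sinh s *
        ((Real.cosh t - Real.cosh s) * (Real.cosh (r + s) - Real.cosh l) *
          (Real.cosh l - Real.cosh (r - s))) ^ (-(1 / 2) : ℝ)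

open Set

/-! ### Elementary estimates for hyperbolic functions -/

lemma cosh_chord {x b : ℝ} (hx : 0 ≤ x) (hxb : x ≤ b) (hb : 0 < b) :
    (Real.cosh b - 1) * (b - x) / b ≤ Real.cosh b - Real.cosh x := by
  have h0 : 0 ≤ x / b := div_nonneg hx hb.le
  have h1 : 0 ≤ 1 - x / b := by
    rw [sub_nonneg, div_le_one hb]; exact hxb
  have e1 := convexOn_exp.2 (mem_univ 0) (mem_univ b) h1 h0 (by ring)
  have e2 := convexOn_exp.2 (mem_univ 0) (mem_univ (-b)) h1 h0 (by ring)
  have hx1 : x / b * b = x := by field_simp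
  have hx2 : x / b * (-b) = -x := by field_simp
  simp only [smul_eq_mul, mul_zero, zero_add, Real.exp_zero, mul_one, hx1, hx2] at e1 e2
  have key : (Real.cosh b - 1) * (b - x) / b = (Real.cosh b - 1) * (1 - x / b) := by
    field_simp
  rw [key, Real.cosh_eq, Real.cosh_eq]
  nlinarith

lemma mul_sinh_le {s : ℝ} (hs : 0 ≤ s) :
    s * Real.sinh s ≤ (2 + s) * (Real.cosh s - 1) := by
  obtain ⟨a, rfl⟩ : ∃ a, s = 2 * a := ⟨s / 2, by ring⟩
  have ha : 0 ≤ a := by linarith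
  have h1 : a ≤ Real.sinh a := Real.self_le_sinh_iff.2 ha
  have h2 : Real.cosh a - Real.sinh a ≤ 1 := by
    rw [Real.cosh_sub_sinh]; exact Real.exp_le_one_iff.2 (by linarith)
  rw [Real.sinh_two_mul, Real.cosh_two_mul, Real.cosh_sq]
  have h3 : a * Real.cosh a ≤ (1 + a) * Real.sinh a := by nlinarith
  nlinarith [mul_le_mul_of_nonneg_right h3 (ha.trans h1)]

lemma sinh_mul_sub_le {d s : ℝ} (hd : 0 ≤ d) (hs : d < s) :
    Real.sinh s * (s - d) / (2 + s) ≤ Real.cosh s - Real.cosh d := by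
  have hs0 : 0 < s := hd.trans_lt hs
  refine le_trans ?_ (cosh_chord hd hs.le hs0)
  rw [div_le_div_iff₀ (by linarith) hs0]
  nlinarith [mul_le_mul_of_nonneg_right (mul_sinh_le hs0.le) (sub_nonneg.2 hs.le)]

lemma sinh_mul_sub_le_cosh_sub {s t : ℝ} (hs : 0 ≤ s) (hst : s ≤ t) :
    Real.sinh s * (t - s) ≤ Real.cosh t - Real.cosh s := by
  have e : Real.cosh t - Real.cosh s =
      2 * Real.sinh ((t + s) / 2) * Real.sinh ((t - s) / 2) := by
    have h1 : t = (t + s) / 2 + (t - s) / 2 := by ring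
    have h2 : s = (t + s) / 2 - (t - s) / 2 := by ring
    conv_lhs => rw [h1]
    conv_lhs => rw [h2]
    rw [Real.cosh_add, Real.cosh_sub]
    ring_nf
  rw [e]
  have h1 : Real.sinh s ≤ Real.sinh ((t + s) / 2) := Real.sinh_le_sinh.2 (by linarith)
  have h2 : (t - s) / 2 ≤ Real.sinh ((t - s) / 2) := Real.self_le_sinh_iff.2 (by linarith)
  have h3 : 0 ≤ Real.sinh s := Real.sinh_nonneg_iff.2 hs
  nlinarith [mul_le_mul h1 h2 (by linarith) (h3.trans h1)]

/-- The constant in the lower bound for `(cosh b - cosh x) (cosh x - cosh d)`. -/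
noncomputable def chordConst (b : ℝ) : ℝ := (Real.cosh b - 1) / (b * (2 + b))

lemma chordConst_pos {b : ℝ} (hb : 0 < b) : 0 < chordConst b :=
  div_pos (sub_pos.2 (Real.one_lt_cosh.2 hb.ne')) (by positivity)

lemma chord_mul_le {d x b : ℝ} (hd : 0 ≤ d) (hdx : d < x) (hxb : x < b) :
    chordConst b * Real.sinh x * ((b - x) * (x - d)) ≤
      (Real.cosh b - Real.cosh x) * (Real.cosh x - Real.cosh d) := by
  have hx : 0 < x := hd.trans_lt hdx
  have hb : 0 < b := hx.trans hxb
  have h1 := cosh_chord hx.le hxb.le hb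
  have h2 := sinh_mul_sub_le hd hdx
  have hs : 0 < Real.sinh x := Real.sinh_pos_iff.2 hx
  have hc : 0 ≤ Real.cosh b - 1 := by linarith [Real.one_le_cosh b]
  have hxd : 0 < x - d := sub_pos.2 hdx
  have hbx : 0 < b - x := sub_pos.2 hxb
  have h3 : Real.sinh x * (x - d) / (2 + b) ≤ Real.sinh x * (x - d) / (2 + x) := by
    gcongr
  refine le_trans (le_of_eq ?_) (mul_le_mul h1 (h3.trans h2) (by positivity)
    (le_trans (by positivity) h1))
  unfold chordConst
  field_simp

lemma triangle_cosh (r s l : ℝ) :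
    (Real.cosh (r + s) - Real.cosh l) * (Real.cosh l - Real.cosh (r - s)) =
      (Real.cosh (r + l) - Real.cosh s) * (Real.cosh s - Real.cosh (r - l)) := by
  simp only [Real.cosh_add, Real.cosh_sub]
  have h1 := Real.cosh_sq r
  have h2 := Real.cosh_sq s
  have h3 := Real.cosh_sq l
  linear_combination (Real.sinh l ^ 2 - Real.sinh s ^ 2) * h1 +
    (1 - Real.cosh r ^ 2) * h2 + (Real.cosh r ^ 2 - 1) * h3

lemma rpow_neg_half_le {x y z : ℝ} (hx : 0 < x) (hy : 0 < y) (h : x ^ 2 * y ≤ z) :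
    z ^ (-(1 / 2) : ℝ) ≤ x⁻¹ * y ^ (-(1 / 2) : ℝ) := by
  refine (Real.rpow_le_rpow_of_nonpos (by positivity) h (by norm_num)).trans (le_of_eq ?_)
  rw [Real.mul_rpow (by positivity) hy.le, ← Real.rpow_natCast, ← Real.rpow_mul hx.le]
  norm_num [Real.rpow_neg_one]

lemma le_rpow_neg_half {x z : ℝ} (hx : 0 < x) (hz : 0 < z) (h : z ≤ x ^ 2) :
    x⁻¹ ≤ z ^ (-(1 / 2) : ℝ) := by
  refine le_trans (le_of_eq ?_) (Real.rpow_le_rpow_of_nonpos hz h (by norm_num))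
  rw [← Real.rpow_natCast, ← Real.rpow_mul hx.le]
  norm_num [Real.rpow_neg_one]

lemma exp_le_cosh_sub_one {b : ℝ} (hb : 1 ≤ b) : Real.exp b / 8 ≤ Real.cosh b - 1 := by
  have h1 := Real.add_one_le_exp b
  have h2 := Real.exp_pos (-b)
  have h3 : Real.exp 1 ≤ Real.exp b := Real.exp_le_exp.2 hb
  have h4 := Real.exp_one_gt_d9
  rw [Real.cosh_eq]
  nlinarith

lemma chordConst_rpow_le {b : ℝ} (hb : 1 ≤ b) :
    chordConst b ^ (-(1 / 2) : ℝ) ≤ 3 * (2 + b) * Real.exp (-(b / 2)) := by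
  have hx : 0 < Real.exp (b / 2) / (3 * (2 + b)) := by positivity
  have h := rpow_neg_half_le (z := chordConst b) hx one_pos ?_
  · refine h.trans (le_of_eq ?_)
    rw [Real.one_rpow, mul_one, inv_div, Real.exp_neg]
    field_simp
  · have h1 := exp_le_cosh_sub_one hb
    have h2 : Real.exp (b / 2) ^ 2 = Real.exp b := by
      rw [← Real.exp_nat_mul]; congr 1; push_cast; ring
    rw [mul_one, div_pow, h2, chordConst, div_le_div_iff₀ (by positivity) (by positivity)]
    have h3 := Real.exp_pos b
    nlinarith [mul_le_mul_of_nonneg_right h1 (by positivity : 0 ≤ (3 * (2 + b)) ^ 2),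
      mul_pos h3 (by linarith : 0 < b)]

/-! ### Singular integrals -/

lemma lintegral_rpow_neg_half {c : ℝ} (hc : 0 ≤ c) :
    ∫⁻ x in Ioo 0 c, ENNReal.ofReal (x ^ (-(1 / 2) : ℝ)) =
      ENNReal.ofReal (2 * c ^ (1 / 2 : ℝ)) := by
  have hi : IntervalIntegrable (fun x : ℝ => x ^ (-(1 / 2) : ℝ)) volume 0 c :=
    intervalIntegrable_rpow' (by norm_num)
  have hi' := (intervalIntegrable_iff_integrableOn_Ioo_of_le hc).1 hi
  rw [← ofReal_integral_eq_lintegral_ofReal hi'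
    ((ae_restrict_iff' measurableSet_Ioo).2 (Filter.Eventually.of_forall
      fun x hx => Real.rpow_nonneg hx.1.le _)),
    ← integral_Ioc_eq_integral_Ioo, ← integral_of_le hc, integral_rpow (Or.inl (by norm_num)),
    show (-(1 / 2) + 1 : ℝ) = 1 / 2 by norm_num, Real.zero_rpow (by norm_num)]
  congr 1
  ring

lemma lintegral_sub_rpow_neg_half {a c : ℝ} (hc : a ≤ c) :
    ∫⁻ x in Ioo a c, ENNReal.ofReal ((x - a) ^ (-(1 / 2) : ℝ)) =
      ENNReal.ofReal (2 * (c - a) ^ (1 / 2 : ℝ)) := by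
  rw [← lintegral_rpow_neg_half (sub_nonneg.2 hc),
    ← (measurePreserving_sub_right volume a).setLIntegral_comp_preimage
      (s := Ioo 0 (c - a)) (f := fun x => ENNReal.ofReal (x ^ (-(1 / 2) : ℝ)))
      measurableSet_Ioo (by fun_prop)]
  congr 2
  ext x; simp

lemma lintegral_rsub_rpow_neg_half {a c : ℝ} (hc : a ≤ c) :
    ∫⁻ x in Ioo a c, ENNReal.ofReal ((c - x) ^ (-(1 / 2) : ℝ)) =
      ENNReal.ofReal (2 * (c - a) ^ (1 / 2 : ℝ)) := by
  rw [← lintegral_rpow_neg_half (sub_nonneg.2 hc),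
    ← (Measure.measurePreserving_sub_left volume c).setLIntegral_comp_preimage
      (s := Ioo 0 (c - a)) (f := fun x => ENNReal.ofReal (x ^ (-(1 / 2) : ℝ)))
      measurableSet_Ioo (by fun_prop)]
  congr 2
  ext x; simp

lemma arcsine_le {d b x : ℝ} (hd : d < x) (hb : x < b) :
    ((b - x) * (x - d)) ^ (-(1 / 2) : ℝ) ≤
      (b - d) ^ (-(1 / 2) : ℝ) * ((b - x) ^ (-(1 / 2) : ℝ) + (x - d) ^ (-(1 / 2) : ℝ)) := by
  have h1 : 0 < b - x := sub_pos.2 hb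
  have h2 : 0 < x - d := sub_pos.2 hd
  have h3 : 0 < b - d := by linarith
  simp only [Real.rpow_neg h1.le, Real.rpow_neg h2.le, Real.rpow_neg h3.le,
    Real.rpow_neg (mul_pos h1 h2).le, ← Real.sqrt_eq_rpow]
  rw [Real.sqrt_mul h1.le]
  have s1 := Real.sqrt_pos.2 h1
  have s2 := Real.sqrt_pos.2 h2
  have s3 := Real.sqrt_pos.2 h3
  have : Real.sqrt (b - d) ≤ Real.sqrt (b - x) + Real.sqrt (x - d) := by
    rw [Real.sqrt_le_left (by positivity)]
    nlinarith [Real.sq_sqrt h1.le, Real.sq_sqrt h2.le, mul_pos s1 s2]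
  field_simp
  linarith

lemma lintegral_arcsine_le (d b : ℝ) :
    ∫⁻ x in Ioo d b, ENNReal.ofReal (((b - x) * (x - d)) ^ (-(1 / 2) : ℝ)) ≤ 4 := by
  rcases le_or_gt b d with h | h
  · simp [Ioo_eq_empty_of_le h]
  have hbd : 0 < b - d := sub_pos.2 h
  have hc : 0 ≤ (b - d) ^ (-(1 / 2) : ℝ) := Real.rpow_nonneg hbd.le _
  calc ∫⁻ x in Ioo d b, ENNReal.ofReal (((b - x) * (x - d)) ^ (-(1 / 2) : ℝ))
      ≤ ∫⁻ x in Ioo d b, ENNReal.ofReal ((b - d) ^ (-(1 / 2) : ℝ)) *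
          (ENNReal.ofReal ((b - x) ^ (-(1 / 2) : ℝ)) +
            ENNReal.ofReal ((x - d) ^ (-(1 / 2) : ℝ))) := by
        refine setLIntegral_mono' measurableSet_Ioo fun x hx => ?_
        rw [← ENNReal.ofReal_add (Real.rpow_nonneg (sub_pos.2 hx.2).le _)
          (Real.rpow_nonneg (sub_pos.2 hx.1).le _), ← ENNReal.ofReal_mul hc]
        exact ENNReal.ofReal_le_ofReal (arcsine_le hx.1 hx.2)
    _ = 4 := by
        rw [lintegral_const_mul _ (by fun_prop), lintegral_add_left (by fun_prop),
          lintegral_sub_rpow_neg_half h.le, lintegral_rsub_rpow_neg_half h.le,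
          ← ENNReal.ofReal_add (by positivity) (by positivity), ← ENNReal.ofReal_mul hc]
        have : (b - d) ^ (-(1 / 2) : ℝ) * (b - d) ^ (1 / 2 : ℝ) = 1 := by
          rw [← Real.rpow_add hbd]; norm_num
        rw [show (b - d) ^ (-(1 / 2) : ℝ) *
          (2 * (b - d) ^ (1 / 2 : ℝ) + 2 * (b - d) ^ (1 / 2 : ℝ)) = 4 by linarith]
        norm_num

/-! ### The kernel of the solution operator -/

open Classical in
/-- The integrand of `Isol`, without the datum, extended by zero to all `s` and `l`. -/
noncomputable def ker (t r s l : ℝ) : ℝ :=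
  if (0 < s ∧ s < t) ∧ |r - s| < l ∧ l < r + s then
    Real.sinh l * Real.sinh s *
      ((Real.cosh t - Real.cosh s) * (Real.cosh (r + s) - Real.cosh l) *
        (Real.cosh l - Real.cosh (r - s))) ^ (-(1 / 2) : ℝ)
  else 0

/-- The radial kernel of the solution operator with respect to `dl`, up to a constant. -/
noncomputable def kerMass (t r l : ℝ) : ENNReal := ∫⁻ s, ENNReal.ofReal (ker t r s l)

lemma ker_of_mem {t r s l : ℝ} (h : (0 < s ∧ s < t) ∧ |r - s| < l ∧ l < r + s) :
    ker t r s l = Real.sinh l * Real.sinh s *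
      ((Real.cosh t - Real.cosh s) * (Real.cosh (r + s) - Real.cosh l) *
        (Real.cosh l - Real.cosh (r - s))) ^ (-(1 / 2) : ℝ) := if_pos h

lemma ker_of_notMem {t r s l : ℝ} (h : ¬ ((0 < s ∧ s < t) ∧ |r - s| < l ∧ l < r + s)) :
    ker t r s l = 0 := if_neg h

lemma triangle_iff {r s l : ℝ} :
    (|r - s| < l ∧ l < r + s) ↔ (|r - l| < s ∧ s < r + l) := by
  simp only [abs_lt]
  constructor <;> rintro ⟨⟨h1, h2⟩, h3⟩ <;> refine ⟨⟨?_, ?_⟩, ?_⟩ <;> linarith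

lemma ker_nonneg (t r s l : ℝ) : 0 ≤ ker t r s l := by
  by_cases h : (0 < s ∧ s < t) ∧ |r - s| < l ∧ l < r + s
  · have hl : 0 < l := (abs_nonneg _).trans_lt h.2.1
    have h1 : Real.cosh s < Real.cosh t :=
      Real.cosh_lt_cosh.2 (by rw [abs_of_pos h.1.1]; exact h.1.2.trans_le (le_abs_self _))
    have h2 : Real.cosh l < Real.cosh (r + s) :=
      Real.cosh_lt_cosh.2 (by rw [abs_of_pos hl]; exact h.2.2.trans_le (le_abs_self _))
    have h3 : Real.cosh (r - s) < Real.cosh l :=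
      Real.cosh_lt_cosh.2 (h.2.1.trans_le (le_abs_self _))
    rw [ker_of_mem h]
    have := Real.sinh_pos_iff.2 hl
    have := Real.sinh_pos_iff.2 h.1.1
    have := mul_pos (mul_pos (sub_pos.2 h1) (sub_pos.2 h2)) (sub_pos.2 h3)
    positivity
  · rw [ker_of_notMem h]

lemma measurable_ker :
    Measurable fun z : ℝ × ℝ × ℝ × ℝ => ker z.1 z.2.1 z.2.2.1 z.2.2.2 := by
  unfold ker
  refine Measurable.ite ?_ (by fun_prop) measurable_const
  have h : ∀ f g : ℝ × ℝ × ℝ × ℝ → ℝ, Measurable f → Measurable g →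
      MeasurableSet {z | f z < g z} := fun f g hf hg => measurableSet_lt hf hg
  exact ((h _ _ (by fun_prop) (by fun_prop)).inter (h _ _ (by fun_prop) (by fun_prop))).inter
    ((h (fun z => |z.2.1 - z.2.2.1|) _ (by fun_prop) (by fun_prop)).inter
      (h _ _ (by fun_prop) (by fun_prop)))

@[fun_prop]
lemma Measurable.ker {α : Type*} [MeasurableSpace α] {a b c d : α → ℝ} (ha : Measurable a)
    (hb : Measurable b) (hc : Measurable c) (hd : Measurable d) :
    Measurable fun x => ker (a x) (b x) (c x) (d x) :=
  measurable_ker.comp (ha.prodMk (hb.prodMk (hc.prodMk hd)))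

@[fun_prop]
lemma Measurable.kerMass {α : Type*} [MeasurableSpace α] {a b c : α → ℝ} (ha : Measurable a)
    (hb : Measurable b) (hc : Measurable c) :
    Measurable fun x => kerMass (a x) (b x) (c x) := by
  unfold _root_.kerMass
  refine Measurable.lintegral_prod_right (f := fun x s => ENNReal.ofReal
    (_root_.ker (a x) (b x) s (c x))) ?_
  simp only [Function.uncurry_def]
  fun_prop

lemma kerMass_eq_zero_of_le {t r l : ℝ} (h : t ≤ |r - l|) : kerMass t r l = 0 := by
  unfold kerMass
  rw [lintegral_eq_zero_iff (by fun_prop)]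
  refine Filter.Eventually.of_forall fun s => ?_
  change ENNReal.ofReal (ker t r s l) = 0
  rw [ker_of_notMem]
  · simp
  · rintro ⟨h1, h2⟩
    linarith [(triangle_iff.1 h2).1]

lemma kerMass_eq_zero_of_nonpos {t r l : ℝ} (h : l ≤ 0) : kerMass t r l = 0 := by
  unfold kerMass
  rw [lintegral_eq_zero_iff (by fun_prop)]
  refine Filter.Eventually.of_forall fun s => ?_
  change ENNReal.ofReal (ker t r s l) = 0
  rw [ker_of_notMem]
  · simp
  · rintro ⟨h1, h2⟩
    linarith [h2.1, abs_nonneg (r - s)]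

lemma lintegral_sinh {a b : ℝ} (ha : 0 ≤ a) (hab : a ≤ b) :
    ∫⁻ s in Ioo a b, ENNReal.ofReal (Real.sinh s) =
      ENNReal.ofReal (Real.cosh b - Real.cosh a) := by
  have hi : IntervalIntegrable Real.sinh volume a b := Real.continuous_sinh.intervalIntegrable a b
  rw [← ofReal_integral_eq_lintegral_ofReal
    ((intervalIntegrable_iff_integrableOn_Ioo_of_le hab).1 hi)
    ((ae_restrict_iff' measurableSet_Ioo).2 (Filter.Eventually.of_forall
      fun x hx => Real.sinh_nonneg_iff.2 (ha.trans hx.1.le))),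
    ← integral_Ioc_eq_integral_Ioo, ← integral_of_le hab,
    integral_eq_sub_of_hasDerivAt (fun x _ => Real.hasDerivAt_cosh x) hi]

lemma cosh_le_exp_of_nonneg {x : ℝ} (hx : 0 ≤ x) : Real.cosh x ≤ Real.exp x := by
  rw [Real.cosh_eq]
  have : Real.exp (-x) ≤ Real.exp x := Real.exp_le_exp.2 (by linarith)
  linarith

lemma ker_ge {t r s l : ℝ} (hl : 0 < l) (hd : |r - l| < s)
    (hs : s < min t (r + l)) :
    2 * Real.sinh l * Real.exp (-(max t (r + l) / 2)) /
      (Real.cosh (min t (r + l)) - Real.cosh |r - l|) * Real.sinh s ≤ ker t r s l := by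
  set c := min t (r + l) with hc
  set M := max t (r + l) with hM
  have hs0 : 0 < s := (abs_nonneg _).trans_lt hd
  have hst : s < t := hs.trans_le (min_le_left _ _)
  have hsb : s < r + l := hs.trans_le (min_le_right _ _)
  have hcM : c ≤ M := min_le_max
  have hcos : ∀ {x y : ℝ}, 0 ≤ x → x < y → Real.cosh x < Real.cosh y := fun {x y} hx hxy =>
    Real.cosh_lt_cosh.2 (by rwa [abs_of_nonneg hx, abs_of_nonneg (hx.trans hxy.le)])
  have h1 := hcos (abs_nonneg _) hd
  have h2 := hcos hs0.le hs
  have h3 := hcos hs0.le (hs.trans_le hcM)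
  have hsplit : (Real.cosh t - Real.cosh s) * (Real.cosh (r + l) - Real.cosh s) =
      (Real.cosh c - Real.cosh s) * (Real.cosh M - Real.cosh s) := by
    rcases le_total t (r + l) with h | h
    · rw [hc, hM, min_eq_left h, max_eq_right h]
    · rw [hc, hM, min_eq_right h, max_eq_left h, mul_comm]
  have hprod : (Real.cosh t - Real.cosh s) * (Real.cosh (r + s) - Real.cosh l) *
        (Real.cosh l - Real.cosh (r - s)) =
      ((Real.cosh c - Real.cosh s) * (Real.cosh s - Real.cosh |r - l|)) *
        (Real.cosh M - Real.cosh s) := by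
    rw [mul_assoc, triangle_cosh, ← mul_assoc, hsplit, Real.cosh_abs]; ring
  rw [ker_of_mem ⟨⟨hs0, hst⟩, triangle_iff.2 ⟨hd, hsb⟩⟩, hprod]
  set A := Real.cosh c - Real.cosh s
  set B := Real.cosh s - Real.cosh |r - l|
  have hA : 0 < A := sub_pos.2 h2
  have hB : 0 < B := sub_pos.2 h1
  have hAB : Real.cosh c - Real.cosh |r - l| = A + B := by simp only [A, B]; ring
  have hM0 : 0 ≤ M := hs0.le.trans (hs.le.trans hcM)
  have hMe : Real.cosh M - Real.cosh s ≤ Real.exp M := by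
    linarith [cosh_le_exp_of_nonneg hM0, Real.cosh_pos s]
  have hsl := Real.sinh_pos_iff.2 hl
  have hss := Real.sinh_pos_iff.2 hs0
  have key := le_rpow_neg_half (x := (A + B) / 2 * Real.exp (M / 2))
    (z := A * B * (Real.cosh M - Real.cosh s)) (by positivity)
    (mul_pos (mul_pos hA hB) (sub_pos.2 h3)) ?_
  · rw [hAB]
    refine le_trans (le_of_eq ?_) (mul_le_mul_of_nonneg_left key (by positivity))
    rw [Real.exp_neg]
    field_simp
  · rw [mul_pow, ← Real.exp_nat_mul, show ((2 : ℕ) : ℝ) * (M / 2) = M by push_cast; ring]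
    refine mul_le_mul ?_ hMe (sub_pos.2 h3).le (by positivity)
    nlinarith [sq_nonneg (A - B)]

lemma kerMass_ge {t r l : ℝ} (hr : 0 < r) (hl : 0 < l) (ht : |r - l| < t) :
    ENNReal.ofReal (2 * Real.sinh l * Real.exp (-(max t (r + l) / 2))) ≤ kerMass t r l := by
  have hd : |r - l| < min t (r + l) :=
    lt_min ht (abs_lt.2 ⟨by linarith, by linarith⟩)
  have hcc : 0 < Real.cosh (min t (r + l)) - Real.cosh |r - l| :=
    sub_pos.2 (Real.cosh_lt_cosh.2 (by
      rw [abs_abs]; exact hd.trans_le (le_abs_self _)))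
  have hsl := Real.sinh_pos_iff.2 hl
  set D := 2 * Real.sinh l * Real.exp (-(max t (r + l) / 2)) with hD
  have hD0 : 0 < D := by positivity
  calc ENNReal.ofReal D
      = ∫⁻ s in Ioo |r - l| (min t (r + l)),
          ENNReal.ofReal (D / (Real.cosh (min t (r + l)) - Real.cosh |r - l|)) *
            ENNReal.ofReal (Real.sinh s) := by
        rw [lintegral_const_mul _ (by fun_prop), lintegral_sinh (abs_nonneg _) hd.le,
          ← ENNReal.ofReal_mul (by positivity)]
        congr 1
        field_simp
    _ ≤ ∫⁻ s in Ioo |r - l| (min t (r + l)), ENNReal.ofReal (ker t r s l) := by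
        refine setLIntegral_mono' measurableSet_Ioo fun s hs => ?_
        rw [← ENNReal.ofReal_mul (by positivity)]
        exact ENNReal.ofReal_le_ofReal (ker_ge hl hs.1 hs.2)
    _ ≤ kerMass t r l := setLIntegral_le_lintegral _ _

lemma ker_le_time {t r s l : ℝ} (h : (0 < s ∧ s < t) ∧ |r - s| < l ∧ l < r + s) :
    ker t r s l ≤ Real.sinh l * chordConst (r + l) ^ (-(1 / 2) : ℝ) *
      ((r + l - s) * (s - |r - l|)) ^ (-(1 / 2) : ℝ) * (t - s) ^ (-(1 / 2) : ℝ) := by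
  have hl : 0 < l := (abs_nonneg _).trans_lt h.2.1
  obtain ⟨hd, hb⟩ := triangle_iff.1 h.2
  have hb0 : 0 < r + l := h.1.1.trans hb
  have hss := Real.sinh_pos_iff.2 h.1.1
  have hsl := Real.sinh_pos_iff.2 hl
  have h1 := sinh_mul_sub_le_cosh_sub h.1.1.le h.1.2.le
  have h2 := chord_mul_le (abs_nonneg _) hd hb
  rw [Real.cosh_abs] at h2
  have hts : 0 < t - s := sub_pos.2 h.1.2
  have hbs : 0 < r + l - s := sub_pos.2 hb
  have hsd : 0 < s - |r - l| := sub_pos.2 hd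
  have hcc := chordConst_pos hb0
  rw [ker_of_mem h, mul_assoc (Real.cosh t - Real.cosh s), triangle_cosh]
  have key := rpow_neg_half_le (x := Real.sinh s)
    (y := chordConst (r + l) * ((r + l - s) * (s - |r - l|)) * (t - s)) hss (by positivity)
    (z := (Real.cosh t - Real.cosh s) *
      ((Real.cosh (r + l) - Real.cosh s) * (Real.cosh s - Real.cosh (r - l)))) ?_
  · refine (mul_le_mul_of_nonneg_left key (by positivity)).trans (le_of_eq ?_)
    rw [Real.mul_rpow (by positivity) hts.le, Real.mul_rpow hcc.le (by positivity)]
    field_simp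
  · refine le_trans (le_of_eq ?_) (mul_le_mul h1 h2 (by positivity)
      (le_trans (by positivity) h1))
    ring

lemma ker_le_space {t r s l : ℝ} (hr : 0 < r)
    (h : (0 < s ∧ s < t) ∧ |r - s| < l ∧ l < r + s) :
    ker t r s l ≤ (2 + r + t) * Real.sinh t ^ (1 / 2 : ℝ) *
      (t - s) ^ (-(1 / 2) : ℝ) * ((r + s - l) * (l - |r - s|)) ^ (-(1 / 2) : ℝ) := by
  have hl : 0 < l := (abs_nonneg _).trans_lt h.2.1
  have hb : 0 < r + s := hl.trans h.2.2
  have ht : 0 < t := h.1.1.trans h.1.2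
  have hss := Real.sinh_pos_iff.2 h.1.1
  have hsl := Real.sinh_pos_iff.2 hl
  have hst := Real.sinh_pos_iff.2 ht
  have hsst : Real.sinh s ≤ Real.sinh t := Real.sinh_le_sinh.2 h.1.2.le
  have hslb : Real.sinh l ≤ Real.sinh (r + s) := Real.sinh_le_sinh.2 h.2.2.le
  have h1 := sinh_mul_sub_le_cosh_sub h.1.1.le h.1.2.le
  have h2 := chord_mul_le (abs_nonneg _) h.2.1 h.2.2
  rw [Real.cosh_abs] at h2
  have hts : 0 < t - s := sub_pos.2 h.1.2
  have hbs : 0 < r + s - l := sub_pos.2 h.2.2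
  have hsd : 0 < l - |r - s| := sub_pos.2 h.2.1
  have hcc := chordConst_pos hb
  have hcs : Real.sinh (r + s) / (2 + (r + s)) ^ 2 ≤ chordConst (r + s) := by
    rw [chordConst, div_le_div_iff₀ (by positivity) (by positivity)]
    nlinarith [mul_sinh_le hb.le]
  rw [ker_of_mem h, mul_assoc (Real.cosh t - Real.cosh s)]
  have key := rpow_neg_half_le (x := Real.sinh s * (Real.sinh l / (2 + (r + s))))
    (y := (Real.sinh t)⁻¹ * (t - s) * ((r + s - l) * (l - |r - s|))) (by positivity)
    (by positivity) (z := (Real.cosh t - Real.cosh s) *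
      ((Real.cosh (r + s) - Real.cosh l) * (Real.cosh l - Real.cosh (r - s)))) ?_
  · refine (mul_le_mul_of_nonneg_left key (by positivity)).trans ?_
    rw [Real.mul_rpow (by positivity) (by positivity),
      Real.mul_rpow (by positivity) (by positivity), Real.inv_rpow hst.le,
      Real.rpow_neg hst.le, inv_inv]
    have e : Real.sinh l * Real.sinh s * ((Real.sinh s * (Real.sinh l / (2 + (r + s))))⁻¹ *
        (Real.sinh t ^ (1 / 2 : ℝ) * (t - s) ^ (-(1 / 2) : ℝ) *
          ((r + s - l) * (l - |r - s|)) ^ (-(1 / 2) : ℝ))) =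
        (2 + (r + s)) * Real.sinh t ^ (1 / 2 : ℝ) *
      (t - s) ^ (-(1 / 2) : ℝ) * ((r + s - l) * (l - |r - s|)) ^ (-(1 / 2) : ℝ) := by
      field_simp
    rw [e]
    gcongr ?_ * _ * _ * _
    linarith [h.1.2]
  · have h3 : Real.sinh s ^ 2 * ((Real.sinh t)⁻¹ * (t - s)) ≤ Real.sinh s * (t - s) := by
      have : Real.sinh s * (Real.sinh t)⁻¹ ≤ 1 := by
        rw [← div_eq_mul_inv, div_le_one hst]; exact hsst
      nlinarith [mul_pos hss hts]
    have h4 : (Real.sinh l / (2 + (r + s))) ^ 2 * ((r + s - l) * (l - |r - s|)) ≤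
        chordConst (r + s) * Real.sinh l * ((r + s - l) * (l - |r - s|)) := by
      refine mul_le_mul_of_nonneg_right ?_ (by positivity)
      refine le_trans ?_ (mul_le_mul_of_nonneg_right hcs hsl.le)
      rw [div_pow, div_mul_eq_mul_div, sq (Real.sinh l)]
      gcongr
    refine le_trans (le_of_eq ?_) (mul_le_mul (h3.trans h1) (h4.trans h2) (by positivity)
      (le_trans (by positivity) h1))
    ring

lemma lintegral_kerMass_le {r l T : ℝ} (hr : 0 < r) (hl : 0 < l) (hT : 0 ≤ T) :
    ∫⁻ t in Iio T, kerMass t r l ≤ ENNReal.ofReal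
      (8 * Real.sinh l * chordConst (r + l) ^ (-(1 / 2) : ℝ) * T ^ (1 / 2 : ℝ)) := by
  have hcc := chordConst_pos (add_pos hr hl)
  have hsl := Real.sinh_pos_iff.2 hl
  set D := Real.sinh l * chordConst (r + l) ^ (-(1 / 2) : ℝ) with hD
  have hD0 : 0 ≤ D := by positivity
  unfold kerMass
  rw [lintegral_lintegral_swap (by simp only [Function.uncurry_def]; fun_prop)]
  have inner : ∀ s, ∫⁻ t in Iio T, ENNReal.ofReal (ker t r s l) ≤
      (Ioo |r - l| (r + l)).indicator (fun s => ENNReal.ofReal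
        (D * (2 * T ^ (1 / 2 : ℝ))) * ENNReal.ofReal
          (((r + l - s) * (s - |r - l|)) ^ (-(1 / 2) : ℝ))) s := by
    intro s
    by_cases hs : |r - l| < s ∧ s < r + l
    swap
    · have : ∀ t, ker t r s l = 0 := fun t => ker_of_notMem fun h => hs (triangle_iff.1 h.2)
      simp [this]
    rw [indicator_of_mem (show s ∈ Ioo |r - l| (r + l) from hs)]
    have hs0 : 0 < s := (abs_nonneg _).trans_lt hs.1
    have hq : 0 ≤ ((r + l - s) * (s - |r - l|)) ^ (-(1 / 2) : ℝ) :=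
      Real.rpow_nonneg (mul_nonneg (sub_nonneg.2 hs.2.le) (sub_nonneg.2 hs.1.le)) _
    have hpt : ∀ t ∈ Iio T, ENNReal.ofReal (ker t r s l) ≤ (Ioo s T).indicator
            (fun t => ENNReal.ofReal (D * ((r + l - s) * (s - |r - l|)) ^ (-(1 / 2) : ℝ)) *
              ENNReal.ofReal ((t - s) ^ (-(1 / 2) : ℝ))) t := by
      intro t ht
      by_cases hst : s < t
      · rw [indicator_of_mem (show t ∈ Ioo s T from ⟨hst, ht⟩),
          ← ENNReal.ofReal_mul (by positivity)]
        exact ENNReal.ofReal_le_ofReal (ker_le_time ⟨⟨hs0, hst⟩, triangle_iff.2 hs⟩)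
      · rw [ker_of_notMem (fun h => hst h.1.2)]
        simp
    calc ∫⁻ t in Iio T, ENNReal.ofReal (ker t r s l)
        ≤ ∫⁻ t in Iio T, (Ioo s T).indicator
            (fun t => ENNReal.ofReal (D * ((r + l - s) * (s - |r - l|)) ^ (-(1 / 2) : ℝ)) *
              ENNReal.ofReal ((t - s) ^ (-(1 / 2) : ℝ))) t :=
          setLIntegral_mono' measurableSet_Iio hpt
      _ ≤ ∫⁻ t in Ioo s T,
          ENNReal.ofReal (D * ((r + l - s) * (s - |r - l|)) ^ (-(1 / 2) : ℝ)) *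
          ENNReal.ofReal ((t - s) ^ (-(1 / 2) : ℝ)) := by
          rw [← lintegral_indicator measurableSet_Ioo]
          exact setLIntegral_le_lintegral _ _
      _ ≤ ENNReal.ofReal (D * ((r + l - s) * (s - |r - l|)) ^ (-(1 / 2) : ℝ)) *
          ENNReal.ofReal (2 * T ^ (1 / 2 : ℝ)) := by
          rw [lintegral_const_mul _ (by fun_prop)]
          gcongr
          rcases le_or_gt s T with h | h
          · rw [lintegral_sub_rpow_neg_half h]
            gcongr
            linarith
          · simp [Ioo_eq_empty_of_le h.le]
      _ = _ := by
          rw [← ENNReal.ofReal_mul (by positivity), ← ENNReal.ofReal_mul (by positivity)]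
          congr 1
          ring
  refine (lintegral_mono inner).trans ?_
  rw [lintegral_indicator measurableSet_Ioo, lintegral_const_mul _ (by fun_prop)]
  refine (mul_le_mul_right (lintegral_arcsine_le _ _) _).trans (le_of_eq ?_)
  rw [show (4 : ENNReal) = ENNReal.ofReal 4 by norm_num, ← ENNReal.ofReal_mul (by positivity)]
  congr 1
  rw [hD]
  ring

lemma lintegral_ker_le {t r : ℝ} (hr : 0 < r) (ht : 0 ≤ t) :
    ∫⁻ s, ∫⁻ l, ENNReal.ofReal (ker t r s l) ≤ ENNReal.ofReal
      (8 * ((2 + r + t) * Real.sinh t ^ (1 / 2 : ℝ) * t ^ (1 / 2 : ℝ))) := by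
  have hst := Real.sinh_nonneg_iff.2 ht
  set D := (2 + r + t) * Real.sinh t ^ (1 / 2 : ℝ) with hD
  have hD0 : 0 ≤ D := by positivity
  have inner : ∀ s, ∫⁻ l, ENNReal.ofReal (ker t r s l) ≤
      (Ioo 0 t).indicator (fun s => ENNReal.ofReal (4 * D) *
        ENNReal.ofReal ((t - s) ^ (-(1 / 2) : ℝ))) s := by
    intro s
    by_cases hs : 0 < s ∧ s < t
    swap
    · have : ∀ l, ker t r s l = 0 := fun l => ker_of_notMem fun h => hs h.1
      simp [this]
    rw [indicator_of_mem (show s ∈ Ioo 0 t from hs)]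
    have hts : 0 ≤ (t - s) ^ (-(1 / 2) : ℝ) := Real.rpow_nonneg (sub_pos.2 hs.2).le _
    have hpt : ∀ l, ENNReal.ofReal (ker t r s l) ≤ (Ioo |r - s| (r + s)).indicator
        (fun l => ENNReal.ofReal (D * (t - s) ^ (-(1 / 2) : ℝ)) *
          ENNReal.ofReal (((r + s - l) * (l - |r - s|)) ^ (-(1 / 2) : ℝ))) l := by
      intro l
      by_cases hl : |r - s| < l ∧ l < r + s
      · rw [indicator_of_mem (show l ∈ Ioo |r - s| (r + s) from hl),
          ← ENNReal.ofReal_mul (by positivity)]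
        exact ENNReal.ofReal_le_ofReal (ker_le_space hr ⟨hs, hl⟩)
      · rw [ker_of_notMem (fun h => hl h.2)]
        simp
    refine (lintegral_mono hpt).trans ?_
    rw [lintegral_indicator measurableSet_Ioo, lintegral_const_mul _ (by fun_prop)]
    refine (mul_le_mul_right (lintegral_arcsine_le _ _) _).trans (le_of_eq ?_)
    rw [show (4 : ENNReal) = ENNReal.ofReal 4 by norm_num, ← ENNReal.ofReal_mul (by positivity),
      ← ENNReal.ofReal_mul (by positivity)]
    congr 1
    ring
  refine (lintegral_mono inner).trans (le_of_eq ?_)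
  rw [lintegral_indicator measurableSet_Ioo, lintegral_const_mul _ (by fun_prop),
    lintegral_rsub_rpow_neg_half ht, ← ENNReal.ofReal_mul (by positivity), sub_zero]
  congr 1
  ring

/-! ### Representation of solutions by nonnegative integrals -/

lemma ofReal_integral_integral {α β : Type*} [MeasurableSpace α] [MeasurableSpace β]
    {μ : Measure α} {ν : Measure β} [SFinite ν] {f : α → β → ℝ}
    (hf : Measurable (Function.uncurry f)) (h0 : ∀ x y, 0 ≤ f x y)
    (hfin : ∫⁻ x, ∫⁻ y, ENNReal.ofReal (f x y) ∂ν ∂μ ≠ ⊤) :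
    ENNReal.ofReal (∫ x, ∫ y, f x y ∂ν ∂μ) = ∫⁻ x, ∫⁻ y, ENNReal.ofReal (f x y) ∂ν ∂μ := by
  have hm : Measurable fun x => ∫⁻ y, ENNReal.ofReal (f x y) ∂ν :=
    Measurable.lintegral_prod_right (f := fun x y => ENNReal.ofReal (f x y)) hf.ennreal_ofReal
  have e : ∀ x, ∫ y, f x y ∂ν = (∫⁻ y, ENNReal.ofReal (f x y) ∂ν).toReal := fun x =>
    integral_eq_lintegral_of_nonneg_ae (Filter.Eventually.of_forall (h0 x))
      (hf.of_uncurry_left).aestronglyMeasurable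
  simp only [e]
  rw [integral_toReal hm.aemeasurable (ae_lt_top hm hfin), ENNReal.ofReal_toReal hfin]

lemma Isol_eq {t r : ℝ} (ht : 0 ≤ t) (hr : 0 < r) (φ : ℝ → ℝ) :
    Isol t r φ = 1 / (Real.pi * Real.sqrt 2) * ∫ s, ∫ l, φ l * ker t r s l := by
  unfold Isol
  congr 1
  rw [integral_of_le ht, integral_Ioc_eq_integral_Ioo,
    ← MeasureTheory.integral_indicator measurableSet_Ioo]
  refine MeasureTheory.integral_congr_ae (Filter.Eventually.of_forall fun s => ?_)
  change (Ioo 0 t).indicator _ s = ∫ l, φ l * ker t r s l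
  by_cases hs : 0 < s ∧ s < t
  swap
  · rw [indicator_of_notMem (show s ∉ Ioo 0 t from hs)]
    have : ∀ l, ker t r s l = 0 := fun l => ker_of_notMem fun h => hs h.1
    simp [this]
  have hle : |r - s| ≤ r + s := abs_le.2 ⟨by linarith [hs.1], by linarith [hs.1]⟩
  rw [indicator_of_mem (show s ∈ Ioo 0 t from hs), integral_of_le hle,
    integral_Ioc_eq_integral_Ioo, ← MeasureTheory.integral_indicator measurableSet_Ioo]
  refine MeasureTheory.integral_congr_ae (Filter.Eventually.of_forall fun l => ?_)
  change (Ioo |r - s| (r + s)).indicator _ l = φ l * ker t r s l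
  by_cases hl : |r - s| < l ∧ l < r + s
  · rw [indicator_of_mem (show l ∈ Ioo |r - s| (r + s) from hl), ker_of_mem ⟨hs, hl⟩]
    ring
  · rw [indicator_of_notMem (show l ∉ Ioo |r - s| (r + s) from hl),
      ker_of_notMem fun h => hl h.2, mul_zero]

lemma Isol_congr {t r : ℝ} (ht : 0 ≤ t) (hr : 0 < r) {φ ψ : ℝ → ℝ}
    (h : ∀ l, 0 < l → φ l = ψ l) : Isol t r φ = Isol t r ψ := by
  rw [Isol_eq ht hr, Isol_eq ht hr]
  congr 1
  refine MeasureTheory.integral_congr_ae (Filter.Eventually.of_forall fun s => ?_)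
  refine MeasureTheory.integral_congr_ae (Filter.Eventually.of_forall fun l => ?_)
  change φ l * ker t r s l = ψ l * ker t r s l
  by_cases hl : 0 < l
  · rw [h l hl]
  · rw [ker_of_notMem fun hh => hl ((abs_nonneg _).trans_lt hh.2.1), mul_zero, mul_zero]

lemma Isol_nonneg {t r : ℝ} (ht : 0 ≤ t) (hr : 0 < r) {φ : ℝ → ℝ} (h : ∀ l, 0 ≤ φ l) :
    0 ≤ Isol t r φ := by
  rw [Isol_eq ht hr]
  exact mul_nonneg (by positivity) (integral_nonneg fun s => integral_nonneg fun l =>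
    mul_nonneg (h l) (ker_nonneg _ _ _ _))

/-- A bound for the total mass of the kernel. -/
noncomputable def kerBound (t r : ℝ) : ℝ :=
  8 * ((2 + r + t) * Real.sinh t ^ (1 / 2 : ℝ) * t ^ (1 / 2 : ℝ))

lemma lintegral_mul_ker_le {t r B : ℝ} (ht : 0 ≤ t) (hr : 0 < r) {φ : ℝ → ℝ}
    (hB : ∀ l, 0 < l → l ≤ r + t → φ l ≤ B) :
    ∫⁻ s, ∫⁻ l, ENNReal.ofReal (φ l * ker t r s l) ≤
      ENNReal.ofReal B * ENNReal.ofReal (kerBound t r) := by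
  refine le_trans ?_ (mul_le_mul_right (lintegral_ker_le hr ht) _)
  rw [← lintegral_const_mul _ (Measurable.lintegral_prod_right
    (f := fun s l => ENNReal.ofReal (ker t r s l))
    (by simp only [Function.uncurry_def]; fun_prop))]
  refine lintegral_mono fun s => ?_
  rw [← lintegral_const_mul _ (by fun_prop)]
  refine lintegral_mono fun l => ?_
  by_cases h : (0 < s ∧ s < t) ∧ |r - s| < l ∧ l < r + s
  · rw [← ENNReal.ofReal_mul' (ker_nonneg _ _ _ _)]
    refine ENNReal.ofReal_le_ofReal (mul_le_mul_of_nonneg_right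
      (hB l ((abs_nonneg _).trans_lt h.2.1) (by linarith [h.2.2, h.1.2])) (ker_nonneg _ _ _ _))
  · simp [ker_of_notMem h]

lemma ofReal_Isol {t r B : ℝ} (ht : 0 ≤ t) (hr : 0 < r) {φ : ℝ → ℝ} (hφ : Measurable φ)
    (h0 : ∀ l, 0 ≤ φ l) (hB : ∀ l, 0 < l → l ≤ r + t → φ l ≤ B) :
    ENNReal.ofReal (Isol t r φ) = ENNReal.ofReal (1 / (Real.pi * Real.sqrt 2)) *
        ∫⁻ l, ENNReal.ofReal (φ l) * kerMass t r l ∧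
      ENNReal.ofReal (Isol t r φ) ≤ ENNReal.ofReal (1 / (Real.pi * Real.sqrt 2)) *
        (ENNReal.ofReal B * ENNReal.ofReal (kerBound t r)) := by
  have hle := lintegral_mul_ker_le ht hr hB
  have e := ofReal_integral_integral (μ := volume) (ν := volume)
    (f := fun s l => φ l * ker t r s l) (by simp only [Function.uncurry_def]; fun_prop)
    (fun s l => mul_nonneg (h0 l) (ker_nonneg _ _ _ _))
    (ne_top_of_le_ne_top (by finiteness) hle)
  rw [Isol_eq ht hr, ENNReal.ofReal_mul (by positivity), e]
  refine ⟨?_, by gcongr⟩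
  congr 1
  rw [lintegral_lintegral_swap (by simp only [Function.uncurry_def]; fun_prop)]
  refine lintegral_congr fun l => ?_
  rw [kerMass, ← lintegral_const_mul _ (by fun_prop)]
  exact lintegral_congr fun s => ENNReal.ofReal_mul (h0 l)

/-- The source term `F ∘ u`, extended by zero outside of the open quadrant. -/
noncomputable def source (F : ℝ → ℝ) (u : ℝ → ℝ → ℝ) (z : ℝ × ℝ) : ℝ :=
  (Ioi 0 ×ˢ Ioi 0).indicator (fun z : ℝ × ℝ => F (u (max z.1 0) (max z.2 0))) z

lemma source_of_pos {F : ℝ → ℝ} {u : ℝ → ℝ → ℝ} {τ l : ℝ} (hτ : 0 < τ) (hl : 0 < l) :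
    source F u (τ, l) = F (u τ l) := by
  rw [source, indicator_of_mem (show (τ, l) ∈ Ioi (0 : ℝ) ×ˢ Ioi (0 : ℝ) from ⟨hτ, hl⟩)]
  simp [hτ.le, hl.le]

lemma source_eq_zero {F : ℝ → ℝ} {u : ℝ → ℝ → ℝ} {z : ℝ × ℝ} (h : z.1 ≤ 0) :
    source F u z = 0 :=
  indicator_of_notMem (fun hz => absurd hz.1 (not_lt.2 h)) _

lemma continuous_max_comp {F : ℝ → ℝ} {u : ℝ → ℝ → ℝ} (hF : Continuous F)
    (hu : ContinuousOn (Function.uncurry u) (Ici 0 ×ˢ Ici 0)) :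
    Continuous fun z : ℝ × ℝ => F (u (max z.1 0) (max z.2 0)) :=
  hF.comp (hu.comp_continuous (f := fun z : ℝ × ℝ => (max z.1 0, max z.2 0)) (by fun_prop)
    fun z => ⟨mem_Ici.2 (le_max_right z.1 0), mem_Ici.2 (le_max_right z.2 0)⟩)

lemma measurable_source {F : ℝ → ℝ} {u : ℝ → ℝ → ℝ} (hF : Continuous F)
    (hu : ContinuousOn (Function.uncurry u) (Ici 0 ×ˢ Ici 0)) : Measurable (source F u) :=
  (continuous_max_comp hF hu).measurable.indicator (measurableSet_Ioi.prod measurableSet_Ioi)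

lemma source_nonneg {F : ℝ → ℝ} (u : ℝ → ℝ → ℝ) (hF : ∀ x, 0 ≤ F x) (z : ℝ × ℝ) :
    0 ≤ source F u z := indicator_nonneg (fun _ _ => hF _) _

lemma exists_source_le {F : ℝ → ℝ} {u : ℝ → ℝ → ℝ} (hF : Continuous F) (hF0 : ∀ x, 0 ≤ F x)
    (hu : ContinuousOn (Function.uncurry u) (Ici 0 ×ˢ Ici 0)) (T R : ℝ) :
    ∃ B, 0 ≤ B ∧ ∀ τ l, τ ≤ T → l ≤ R → source F u (τ, l) ≤ B := by
  obtain ⟨B, hB⟩ := ((isCompact_Icc (a := 0) (b := T)).prod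
    (isCompact_Icc (a := 0) (b := R))).bddAbove_image (continuous_max_comp hF hu).continuousOn
  refine ⟨max B 0, le_max_right _ _, fun τ l hτ hl => ?_⟩
  by_cases h : 0 < τ ∧ 0 < l
  · refine le_trans (indicator_le_self' (fun _ _ => hF0 _) _) (le_trans ?_ (le_max_left _ _))
    exact hB (mem_image_of_mem _ ⟨⟨h.1.le, hτ⟩, ⟨h.2.le, hl⟩⟩)
  · rw [source, indicator_of_notMem
      (show (τ, l) ∉ Ioi (0 : ℝ) ×ˢ Ioi (0 : ℝ) from fun hz => h hz)]
    exact le_max_right _ _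

lemma kerBound_mono {t t' r : ℝ} (hr : 0 < r) (ht : 0 ≤ t) (htt : t ≤ t') :
    kerBound t r ≤ kerBound t' r := by
  unfold kerBound
  have h1 : Real.sinh t ≤ Real.sinh t' := Real.sinh_le_sinh.2 htt
  have h0 : 0 ≤ Real.sinh t := Real.sinh_nonneg_iff.2 ht
  have h2 := h0.trans h1
  have h3 := ht.trans htt
  gcongr

lemma ofReal_duhamel {F : ℝ → ℝ} {u : ℝ → ℝ → ℝ} (hF : Continuous F) (hF0 : ∀ x, 0 ≤ F x)
    (hu : ContinuousOn (Function.uncurry u) (Ici 0 ×ˢ Ici 0)) {t r : ℝ} (ht : 0 ≤ t)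
    (hr : 0 < r) :
    ENNReal.ofReal (∫ τ in (0 : ℝ)..t, Isol (t - τ) r (fun l => F (u τ l))) =
      ENNReal.ofReal (1 / (Real.pi * Real.sqrt 2)) *
        ∫⁻ z, ENNReal.ofReal (source F u z) * kerMass (t - z.1) r z.2 := by
  have hS := measurable_source hF hu
  set c := ENNReal.ofReal (1 / (Real.pi * Real.sqrt 2)) with hc
  obtain ⟨B, hB0, hB⟩ := exists_source_le hF hF0 hu t (r + t)
  set G : ℝ → ENNReal := fun τ =>
    c * ∫⁻ l, ENNReal.ofReal (source F u (τ, l)) * kerMass (t - τ) r l with hG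
  have hGm : Measurable G := by
    refine Measurable.const_mul (Measurable.lintegral_prod_right (f := fun τ l =>
      ENNReal.ofReal (source F u (τ, l)) * kerMass (t - τ) r l) ?_) _
    simp only [Function.uncurry_def]
    fun_prop
  have key : ∀ τ ∈ Ioo 0 t, ENNReal.ofReal (Isol (t - τ) r (fun l => F (u τ l))) = G τ ∧
      G τ ≤ c * (ENNReal.ofReal B * ENNReal.ofReal (kerBound t r)) ∧
      0 ≤ Isol (t - τ) r (fun l => F (u τ l)) := by
    intro τ hτ
    have hτ' : 0 ≤ t - τ := sub_nonneg.2 hτ.2.le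
    rw [Isol_congr hτ' hr (ψ := fun l => source F u (τ, l))
      (fun l hl => (source_of_pos hτ.1 hl).symm)]
    have h := ofReal_Isol hτ' hr (φ := fun l => source F u (τ, l)) (B := B) (by fun_prop)
      (fun l => source_nonneg u hF0 _) (fun l _ hl => hB τ l hτ.2.le (by linarith [hτ.1]))
    refine ⟨h.1, ?_, Isol_nonneg hτ' hr fun l => source_nonneg u hF0 _⟩
    refine (h.1 ▸ h.2 : G τ ≤ _).trans ?_
    gcongr
    exact kerBound_mono hr hτ' (by linarith [hτ.1])
  have hfin : ∫⁻ τ in Ioo 0 t, G τ ≠ ⊤ := by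
    refine ne_top_of_le_ne_top (b := c * (ENNReal.ofReal B * ENNReal.ofReal (kerBound t r)) *
      volume (Ioo 0 t)) (by rw [Real.volume_Ioo]; finiteness) ?_
    rw [← setLIntegral_const]
    exact setLIntegral_mono' measurableSet_Ioo fun τ hτ => (key τ hτ).2.1
  have e1 : ∫ τ in (0 : ℝ)..t, Isol (t - τ) r (fun l => F (u τ l)) =
      (∫⁻ τ in Ioo 0 t, G τ).toReal := by
    rw [integral_of_le ht, integral_Ioc_eq_integral_Ioo,
      ← integral_toReal hGm.aemeasurable (ae_lt_top hGm hfin)]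
    refine setIntegral_congr_fun measurableSet_Ioo fun τ hτ => ?_
    rw [← (key τ hτ).1, ENNReal.toReal_ofReal (key τ hτ).2.2]
  rw [e1, ENNReal.ofReal_toReal hfin]
  have e2 : ∫⁻ τ in Ioo 0 t, G τ = ∫⁻ τ, G τ := by
    refine setLIntegral_eq_of_support_subset fun τ hτ => ?_
    by_contra hmem
    refine hτ ?_
    rcases le_or_gt τ 0 with h | h
    · simp [hG, source_eq_zero (F := F) (u := u) (z := (τ, _)) h]
    · have h' : t ≤ τ := by
        by_contra! hlt
        exact hmem ⟨h, hlt⟩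
      simp only [hG]
      rw [lintegral_congr (g := fun _ => 0) fun l => by
        rw [kerMass_eq_zero_of_le (by linarith [abs_nonneg (r - l)]), mul_zero]]
      simp
  rw [e2, hG, lintegral_const_mul' _ _ (by finiteness), Measure.volume_eq_prod,
    lintegral_prod _ (by fun_prop)]

lemma ofReal_solution {F : ℝ → ℝ} {u : ℝ → ℝ → ℝ} (hF : Continuous F) (hF0 : ∀ x, 0 ≤ F x)
    (hu : ContinuousOn (Function.uncurry u) (Ici 0 ×ˢ Ici 0)) {u₁ : ℝ → ℝ}
    (hu₁ : Continuous u₁) (hu₁0 : ∀ l, 0 ≤ u₁ l) {ε : ℝ} (hε : 0 < ε)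
    (heq : ∀ t : ℝ, 0 ≤ t → ∀ r : ℝ, 0 < r →
        u t r = ε * Isol t r u₁ +
          ∫ τ in (0 : ℝ)..t, Isol (t - τ) r (fun l => F (u τ l)))
    {t r : ℝ} (ht : 0 ≤ t) (hr : 0 < r) :
    ENNReal.ofReal (u t r) = ENNReal.ofReal (1 / (Real.pi * Real.sqrt 2)) *
      (ENNReal.ofReal ε * (∫⁻ l, ENNReal.ofReal (u₁ l) * kerMass t r l) +
        ∫⁻ z, ENNReal.ofReal (source F u z) * kerMass (t - z.1) r z.2) := by
  obtain ⟨B, hB⟩ := (isCompact_Icc (a := 0) (b := r + t)).bddAbove_image hu₁.continuousOn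
  have h1 := (ofReal_Isol ht hr hu₁.measurable hu₁0
    (fun l hl hl' => hB (mem_image_of_mem _ ⟨hl.le, hl'⟩))).1
  rw [heq t ht r hr, ENNReal.ofReal_add (mul_nonneg hε.le (Isol_nonneg ht hr hu₁0))
    (intervalIntegral.integral_nonneg ht fun τ hτ =>
      Isol_nonneg (sub_nonneg.2 hτ.2) hr fun l => hF0 _), ENNReal.ofReal_mul hε.le, h1,
    ofReal_duhamel hF hF0 hu ht hr]
  ring

/-! ### Lower bounds by weighted masses of the source -/

/-- The mass of a source `W` on `S`, weighted by `sinh l * exp (-l / 2)`. -/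
noncomputable def mass (W : ℝ × ℝ → ENNReal) (S : Set (ℝ × ℝ)) : ENNReal :=
  ∫⁻ z in S, W z * ENNReal.ofReal (Real.sinh z.2 * Real.exp (-(z.2 / 2)))

lemma mass_mono (W : ℝ × ℝ → ENNReal) {S S' : Set (ℝ × ℝ)} (h : S ⊆ S') :
    mass W S ≤ mass W S' := lintegral_mono_set h

/-- The constant in the lower bounds for solutions. -/
noncomputable def massConst : ℝ := 2 * (1 / (Real.pi * Real.sqrt 2))

lemma massConst_pos : 0 < massConst := by unfold massConst; positivity

/-- `u` is bounded below by weighted masses of the source `W` on subsets of the backward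
light cone. -/
def DominatesMass (W : ℝ × ℝ → ENNReal) (u : ℝ → ℝ → ℝ) : Prop :=
  ∀ t r a : ℝ, ∀ S : Set (ℝ × ℝ), 0 ≤ t → 0 < r → MeasurableSet S →
    (∀ z ∈ S, 0 < z.2 ∧ |r - z.2| < t - z.1 ∧ t - z.1 ≤ z.2 + a ∧ r ≤ a) →
    ENNReal.ofReal (massConst * Real.exp (-(a / 2))) * mass W S ≤ ENNReal.ofReal (u t r)

lemma dominatesMass_of_le {W : ℝ × ℝ → ENNReal} {u : ℝ → ℝ → ℝ}
    (h : ∀ t r : ℝ, 0 ≤ t → 0 < r → ENNReal.ofReal (1 / (Real.pi * Real.sqrt 2)) *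
      (∫⁻ z, W z * kerMass (t - z.1) r z.2) ≤ ENNReal.ofReal (u t r)) :
    DominatesMass W u := by
  intro t r a S ht hr hS hz
  refine le_trans ?_ (h t r ht hr)
  rw [massConst, mul_assoc, mul_left_comm, ENNReal.ofReal_mul (by positivity), mul_assoc]
  gcongr
  refine le_trans ?_ (setLIntegral_le_lintegral S _)
  rw [mass, ← lintegral_const_mul' _ _ (by finiteness)]
  refine setLIntegral_mono' hS fun z hzS => ?_
  obtain ⟨h1, h2, h3, h4⟩ := hz z hzS
  rw [mul_left_comm]
  gcongr
  refine le_trans ?_ (kerMass_ge hr h1 h2)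
  rw [← ENNReal.ofReal_mul (by positivity)]
  refine ENNReal.ofReal_le_ofReal ?_
  have hs : 0 ≤ Real.sinh z.2 := Real.sinh_nonneg_iff.2 h1.le
  have he : Real.exp (-((z.2 + a) / 2)) ≤ Real.exp (-(max (t - z.1) (r + z.2) / 2)) := by
    gcongr
    exact max_le h3 (by linarith)
  calc 2 * Real.exp (-(a / 2)) * (Real.sinh z.2 * Real.exp (-(z.2 / 2)))
      = 2 * Real.sinh z.2 * Real.exp (-((z.2 + a) / 2)) := by
        rw [show -((z.2 + a) / 2) = -(a / 2) + -(z.2 / 2) by ring, Real.exp_add]; ring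
    _ ≤ _ := by gcongr

lemma le_of_ofReal_le {x y : ℝ} (hx : 0 < x) (h : ENNReal.ofReal x ≤ ENNReal.ofReal y) :
    x ≤ y :=
  (ENNReal.ofReal_le_ofReal_iff'.1 h).resolve_right (not_le.2 hx)

/-- The gain in one step of the local blow-up iteration. -/
noncomputable def stepConst : ℝ :=
  massConst * Real.exp (-(2 / 2)) * Real.exp (-(3 / 2)) / 32

lemma stepConst_pos : 0 < stepConst := by
  have := massConst_pos
  unfold stepConst; positivity

lemma local_step {W : ℝ × ℝ → ENNReal} {F : ℝ → ℝ} {u : ℝ → ℝ → ℝ} {δ q : ℝ}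
    (hd : DominatesMass W u)
    (hW : ∀ τ l : ℝ, 0 < τ → 0 < l → W (τ, l) = ENNReal.ofReal (F (u τ l)))
    (hδ : 0 < δ) (hq : 1 < q) (hF : ∀ x : ℝ, 1 / δ < |x| → δ * |x| ^ q ≤ F x)
    {m a b h : ℝ} (hm : 1 / δ < m) (ha : 0 ≤ a) (hb : b ≤ a + 1) (hh : 0 < h) (hh1 : h ≤ 1)
    (H : ∀ t r : ℝ, a ≤ t → t ≤ b → 0 < r → r ≤ 1 + b - t → m ≤ u t r)
    {t r : ℝ} (hat : a + h ≤ t) (htb : t ≤ b) (hr : 0 < r) (hrb : r ≤ 1 + b - t) :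
    stepConst * δ * m ^ q * h ^ 3 ≤ u t r := by
  have hm0 : 0 < m := (by positivity : 0 < 1 / δ).trans hm
  have hs := stepConst_pos
  refine le_of_ofReal_le (by positivity) ?_
  set S := Ioo a (a + h / 2) ×ˢ Ioo (r + h / 4) (r + h / 2) with hS
  have hSm : MeasurableSet S := measurableSet_Ioo.prod measurableSet_Ioo
  refine le_trans ?_ (hd t r 2 S (by linarith) hr hSm fun z hz => ?_)
  swap
  · obtain ⟨⟨h1, h2⟩, h3, h4⟩ := hz
    refine ⟨by linarith, abs_lt.2 ⟨by linarith, by linarith⟩, by linarith, by linarith⟩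
  have hmass : ENNReal.ofReal (δ * m ^ q * (h / 4 * Real.exp (-(3 / 2))) *
      ((h / 2) * (h / 4))) ≤ mass W S := by
    have hv : volume S = ENNReal.ofReal ((h / 2) * (h / 4)) := by
      rw [hS, Measure.volume_eq_prod, Measure.prod_prod, Real.volume_Ioo, Real.volume_Ioo,
        ← ENNReal.ofReal_mul (by linarith)]
      congr 1; ring
    rw [ENNReal.ofReal_mul (by positivity), ← hv, ← setLIntegral_const]
    refine setLIntegral_mono' hSm ?_
    rintro ⟨τ, l⟩ ⟨⟨h1, h2⟩, h3, h4⟩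
    simp only at h1 h2 h3 h4
    rw [hW τ l (by linarith) (by linarith), ENNReal.ofReal_mul (by positivity)]
    have hu : m ≤ u τ l := H τ l h1.le (by linarith) (by linarith) (by linarith)
    have hu0 : 0 < u τ l := by linarith
    have hFu := hF (u τ l) (by rw [abs_of_pos hu0]; linarith)
    rw [abs_of_pos hu0] at hFu
    have hsl : h / 4 ≤ Real.sinh l :=
      (by linarith : h / 4 ≤ l).trans (Real.self_le_sinh_iff.2 (by linarith))
    have hl : l ≤ 3 := by linarith
    have hFm : δ * m ^ q ≤ F (u τ l) := le_trans (by gcongr) hFu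
    change _ ≤ _ * ENNReal.ofReal (Real.sinh l * Real.exp (-(l / 2)))
    gcongr
    exact (by positivity : 0 ≤ h / 4).trans hsl
  refine le_trans ?_ (mul_le_mul_right hmass _)
  rw [← ENNReal.ofReal_mul (mul_nonneg massConst_pos.le (Real.exp_nonneg _))]
  refine ENNReal.ofReal_le_ofReal (le_of_eq ?_)
  unfold stepConst
  ring

lemma exists_not_forall_ge {W : ℝ × ℝ → ENNReal} {F : ℝ → ℝ} {u : ℝ → ℝ → ℝ} {δ q : ℝ}
    (hd : DominatesMass W u)
    (hW : ∀ τ l : ℝ, 0 < τ → 0 < l → W (τ, l) = ENNReal.ofReal (F (u τ l)))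
    (hδ : 0 < δ) (hq : 1 < q) (hF : ∀ x : ℝ, 1 / δ < |x| → δ * |x| ^ q ≤ F x) :
    ∃ M : ℝ, 0 < M ∧ ∀ T : ℝ, 0 ≤ T →
      ¬ ∀ t r : ℝ, T ≤ t → t ≤ T + 1 → 0 < r → r ≤ 2 → M ≤ u t r := by
  have hs := stepConst_pos
  have hq' : 0 < q - 1 := by linarith
  set Λ : ℝ := 8 ^ (1 / (q - 1)) with hΛ
  have hΛ1 : 1 < Λ := Real.one_lt_rpow (by norm_num) (by positivity)
  have hΛ8 : Λ ^ (q - 1) = 8 := by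
    rw [hΛ, ← Real.rpow_mul (by norm_num), one_div, inv_mul_cancel₀ hq'.ne', Real.rpow_one]
  obtain ⟨M, hM1, hM2⟩ := (((tendsto_rpow_atTop hq').eventually_ge_atTop
    (8 * Λ / (stepConst * δ))).and (Filter.eventually_gt_atTop (1 / δ))).exists
  have hM0 : 0 < M := (by positivity : 0 < 1 / δ).trans hM2
  rw [div_le_iff₀ (by positivity)] at hM1
  refine ⟨M, hM0, fun T hT H => ?_⟩
  have key : ∀ k : ℕ, ∀ t r : ℝ, T + 1 - (1 / 2) ^ k ≤ t → t ≤ T + 1 → 0 < r →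
      r ≤ 1 + (T + 1) - t → M * Λ ^ k ≤ u t r := by
    intro k
    induction k with
    | zero =>
      intro t r h1 h2 h3 h4
      simp only [pow_zero, mul_one] at h1 ⊢
      exact H t r (by linarith) h2 h3 (by linarith)
    | succ k ih =>
      intro t r h1 h2 h3 h4
      have hk0 : (0 : ℝ) < (1 / 2) ^ k := by positivity
      have hk1 : (1 / 2 : ℝ) ^ k ≤ 1 := pow_le_one₀ (by norm_num) (by norm_num)
      have hΛk : 1 ≤ Λ ^ k := one_le_pow₀ hΛ1.le
      rw [pow_succ] at h1
      refine le_trans ?_ (local_step hd hW hδ hq hF (m := M * Λ ^ k)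
        (a := T + 1 - (1 / 2) ^ k) (b := T + 1) (h := (1 / 2) ^ k * (1 / 2))
        (by nlinarith) (by linarith) (by linarith) (by positivity) (by linarith) ih
        (by linarith) h2 h3 h4)
      have e1 : (M * Λ ^ k) ^ q = M ^ (q - 1) * 8 ^ k * (M * Λ ^ k) := by
        rw [← hΛ8, ← Real.rpow_natCast (Λ ^ (q - 1)), ← Real.rpow_mul (by positivity),
          mul_comm (q - 1), Real.rpow_mul (by positivity), Real.rpow_natCast,
          ← Real.mul_rpow (by positivity) (by positivity)]
        conv_rhs => rw [← Real.rpow_add_one (by positivity)]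
        congr 1; ring
      have e2 : ((1 / 2 : ℝ) ^ k * (1 / 2)) ^ 3 * 8 ^ k = 1 / 8 := by
        have : (8 : ℝ) ^ k = (2 ^ k) ^ 3 := by rw [← pow_mul, mul_comm, pow_mul]; norm_num
        rw [this, one_div_pow]
        field_simp
        norm_num
      calc M * Λ ^ (k + 1) = 8 * Λ * (M * Λ ^ k) * (1 / 8) := by ring
        _ ≤ M ^ (q - 1) * (stepConst * δ) * (M * Λ ^ k) * (1 / 8) := by gcongr
        _ = _ := by rw [e1, ← e2]; ring
  obtain ⟨k, hk⟩ := ((tendsto_pow_atTop_atTop_of_one_lt hΛ1).eventually_gt_atTop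
    (u (T + 1) 1 / M)).exists
  rw [div_lt_iff₀ hM0] at hk
  have := key k (T + 1) 1 (by linarith [(by positivity : (0 : ℝ) < (1 / 2) ^ k)]) le_rfl
    one_pos (by linarith)
  linarith

lemma exists_mass_le {W : ℝ × ℝ → ENNReal} {F : ℝ → ℝ} {u : ℝ → ℝ → ℝ} {δ q : ℝ}
    (hd : DominatesMass W u)
    (hW : ∀ τ l : ℝ, 0 < τ → 0 < l → W (τ, l) = ENNReal.ofReal (F (u τ l)))
    (hδ : 0 < δ) (hq : 1 < q) (hF : ∀ x : ℝ, 1 / δ < |x| → δ * |x| ^ q ≤ F x) :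
    ∃ C : ℝ, 0 < C ∧ ∀ x : ℝ, 0 ≤ x →
      mass W {z | 0 < z.1 ∧ 0 < z.2 ∧ z.1 + z.2 < x} ≤ ENNReal.ofReal (C * (x + 1)) := by
  obtain ⟨M, hM, hno⟩ := exists_not_forall_ge hd hW hδ hq hF
  have hc := massConst_pos
  set k := massConst * Real.exp (-(4 / 2)) with hk
  have hk0 : 0 < k := by positivity
  have strip : ∀ N : ℕ, mass W {z | 0 < z.1 ∧ 0 < z.2 ∧ (N : ℝ) ≤ z.1 + z.2 ∧
      z.1 + z.2 < N + 1} ≤ ENNReal.ofReal (M / k) := by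
    intro N
    by_contra! hlt
    refine hno (N + 3) (by positivity) fun t r h1 h2 h3 h4 => le_of_ofReal_le hM ?_
    have := hd t r 4 _ (by linarith [N.cast_nonneg (α := ℝ)]) h3
      (by measurability : MeasurableSet {z : ℝ × ℝ | 0 < z.1 ∧ 0 < z.2 ∧ (N : ℝ) ≤ z.1 + z.2 ∧
        z.1 + z.2 < N + 1}) (fun z ⟨g1, g2, g3, g4⟩ =>
        ⟨g2, abs_lt.2 ⟨by linarith, by linarith⟩, by linarith, by linarith⟩)
    refine le_trans ?_ this
    refine le_trans ?_ (mul_le_mul_right hlt.le _)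
    rw [← ENNReal.ofReal_mul hk0.le, mul_div_cancel₀ _ hk0.ne']
  have sum : ∀ N : ℕ, mass W {z | 0 < z.1 ∧ 0 < z.2 ∧ z.1 + z.2 < N} ≤
      ENNReal.ofReal (M / k * N) := by
    intro N
    induction N with
    | zero =>
      have : {z : ℝ × ℝ | 0 < z.1 ∧ 0 < z.2 ∧ z.1 + z.2 < (0 : ℕ)} = ∅ := by
        ext z
        simp only [mem_ofPred_eq, mem_empty_iff_false, iff_false, Nat.cast_zero]
        rintro ⟨h1, h2, h3⟩
        linarith
      rw [this, mass]
      simp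
    | succ N ih =>
      have hsub : {z : ℝ × ℝ | 0 < z.1 ∧ 0 < z.2 ∧ z.1 + z.2 < (N + 1 : ℕ)} ⊆
          {z | 0 < z.1 ∧ 0 < z.2 ∧ z.1 + z.2 < N} ∪
          {z | 0 < z.1 ∧ 0 < z.2 ∧ (N : ℝ) ≤ z.1 + z.2 ∧ z.1 + z.2 < N + 1} := by
        rintro z ⟨h1, h2, h3⟩
        push_cast at h3
        rcases lt_or_ge (z.1 + z.2) N with h | h
        · exact Or.inl ⟨h1, h2, h⟩
        · exact Or.inr ⟨h1, h2, h, h3⟩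
      refine (mass_mono W hsub).trans ((lintegral_union_le _ _ _).trans ?_)
      refine (add_le_add ih (strip N)).trans (le_of_eq ?_)
      rw [← ENNReal.ofReal_add (by positivity) (by positivity)]
      congr 1
      push_cast; ring
  refine ⟨M / k, by positivity, fun x hx => ?_⟩
  refine (mass_mono W (S' := {z | 0 < z.1 ∧ 0 < z.2 ∧ z.1 + z.2 < (⌈x⌉₊ : ℝ)})
    fun z hz => ⟨hz.1, hz.2.1, hz.2.2.trans_le (Nat.le_ceil x)⟩).trans
    ((sum ⌈x⌉₊).trans (ENNReal.ofReal_le_ofReal ?_))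
  have := (Nat.ceil_lt_add_one hx).le
  gcongr

/-! ### Linear lower bound and averaged upper bound -/

lemma exists_linear_lower_bound {u : ℝ → ℝ → ℝ} {u₁ : ℝ → ℝ} {ε τ₀ : ℝ} (hε : 0 < ε)
    (hτ₀ : 0 < τ₀) (hu₁ : ∀ l ∈ Icc τ₀ (3 * τ₀), 1 ≤ u₁ l)
    (hlin : ∀ t r : ℝ, 0 ≤ t → 0 < r → ENNReal.ofReal (1 / (Real.pi * Real.sqrt 2)) *
      (ENNReal.ofReal ε * ∫⁻ l, ENNReal.ofReal (u₁ l) * kerMass t r l) ≤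
        ENNReal.ofReal (u t r)) :
    ∃ c : ℝ, 0 < c ∧ ∀ t r : ℝ, 3 * τ₀ < t → 0 < r → r ≤ t →
      c * Real.exp (-(t / 2)) ≤ u t r := by
  have hs := Real.sinh_pos_iff.2 hτ₀
  refine ⟨1 / (Real.pi * Real.sqrt 2) * (ε * (2 * Real.sinh τ₀ * Real.exp (-(3 * τ₀ / 2)) *
    (2 * τ₀))), by positivity, fun t r ht hr hrt => le_of_ofReal_le (by positivity) ?_⟩
  refine le_trans ?_ (hlin t r (by linarith) hr)
  have key : ENNReal.ofReal (2 * Real.sinh τ₀ * Real.exp (-((t + 3 * τ₀) / 2)) * (2 * τ₀)) ≤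
      ∫⁻ l, ENNReal.ofReal (u₁ l) * kerMass t r l := by
    refine le_trans ?_ (setLIntegral_le_lintegral (Ioo τ₀ (3 * τ₀)) _)
    rw [ENNReal.ofReal_mul (by positivity),
      show ENNReal.ofReal (2 * τ₀) = volume (Ioo τ₀ (3 * τ₀)) by
        rw [Real.volume_Ioo]; congr 1; ring, ← setLIntegral_const]
    refine setLIntegral_mono' measurableSet_Ioo fun l hl => ?_
    have h1 : 1 ≤ ENNReal.ofReal (u₁ l) := by
      simpa using ENNReal.ofReal_le_ofReal (hu₁ l ⟨hl.1.le, hl.2.le⟩)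
    refine le_trans ?_ (le_mul_of_one_le_left zero_le h1)
    refine le_trans (ENNReal.ofReal_le_ofReal ?_) (kerMass_ge hr (hτ₀.trans hl.1)
      (abs_lt.2 ⟨by linarith [hl.2], by linarith [hl.1]⟩))
    have hsl : Real.sinh τ₀ ≤ Real.sinh l := Real.sinh_le_sinh.2 hl.1.le
    have hmax : max t (r + l) ≤ t + 3 * τ₀ := max_le (by linarith) (by linarith [hl.2])
    have := hs.le.trans hsl
    gcongr
  refine le_trans (le_of_eq ?_) (mul_le_mul_right (mul_le_mul_right key _) _)
  rw [← ENNReal.ofReal_mul hε.le, ← ENNReal.ofReal_mul (by positivity)]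
  congr 1
  rw [show -((t + 3 * τ₀) / 2) = -(3 * τ₀ / 2) + -(t / 2) by ring, Real.exp_add]
  ring

lemma setLIntegral_kerMass_eq_zero {r T τ l : ℝ} (h : r + T ≤ τ + l) :
    ∫⁻ t in Ioo 0 T, kerMass (t - τ) r l = 0 := by
  refine setLIntegral_eq_zero measurableSet_Ioo fun t ht => ?_
  refine kerMass_eq_zero_of_le ?_
  rw [abs_sub_comm]
  exact le_trans (by linarith [ht.2]) (le_abs_self _)

lemma setLIntegral_kerMass_le {r T τ l : ℝ} (hr : 1 ≤ r) (hrT : r ≤ T) (hτ : 0 ≤ τ) :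
    ∫⁻ t in Ioo 0 T, kerMass (t - τ) r l ≤
      ENNReal.ofReal (120 * T ^ 2 * Real.exp (-(r / 2))) *
        (Ioi 0).indicator (fun l => ENNReal.ofReal (Real.sinh l * Real.exp (-(l / 2)))) l := by
  rcases le_or_gt l 0 with hl | hl
  · simp [kerMass_eq_zero_of_nonpos hl]
  rcases le_or_gt (r + T) (τ + l) with h | h
  · rw [setLIntegral_kerMass_eq_zero h]
    exact zero_le
  rw [indicator_of_mem (mem_Ioi.2 hl), ← ENNReal.ofReal_mul (by positivity)]
  have hT : 1 ≤ T := hr.trans hrT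
  have hs : 0 ≤ Real.sinh l := Real.sinh_nonneg_iff.2 hl.le
  calc ∫⁻ t in Ioo 0 T, kerMass (t - τ) r l
      ≤ ∫⁻ t, (Iio T).indicator (fun s => kerMass s r l) (t - τ) := by
        rw [← lintegral_indicator measurableSet_Ioo]
        refine lintegral_mono (indicator_le fun t ht => ?_)
        rw [indicator_of_mem (show t - τ ∈ Iio T from lt_of_le_of_lt (by linarith) ht.2)]
    _ = ∫⁻ t in Iio T, kerMass t r l := by
        rw [lintegral_sub_right_eq_self (fun t => (Iio T).indicator (fun s => kerMass s r l) t),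
          lintegral_indicator measurableSet_Iio]
    _ ≤ _ := lintegral_kerMass_le (by linarith) hl (by linarith)
    _ ≤ _ := by
        refine ENNReal.ofReal_le_ofReal ?_
        have h1 := chordConst_rpow_le (b := r + l) (by linarith)
        have h2 : T ^ (1 / 2 : ℝ) ≤ T := by
          simpa using Real.rpow_le_rpow_of_exponent_le hT (by norm_num : (1 / 2 : ℝ) ≤ 1)
        have h3 : 2 + (r + l) ≤ 5 * T := by linarith
        calc _ ≤ 8 * Real.sinh l * (3 * (2 + (r + l)) * Real.exp (-((r + l) / 2))) * T := by
              gcongr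
          _ ≤ 8 * Real.sinh l * (3 * (5 * T) * Real.exp (-((r + l) / 2))) * T := by gcongr
          _ = _ := by
              rw [show -((r + l) / 2) = -(r / 2) + -(l / 2) by ring, Real.exp_add]; ring

lemma exists_lintegral_solution_le {W : ℝ × ℝ → ENNReal} {u : ℝ → ℝ → ℝ} {u₁ : ℝ → ℝ}
    {ε C : ℝ} (hW : Measurable W) (hW0 : ∀ z : ℝ × ℝ, z.1 ≤ 0 → W z = 0)
    (hu₁ : Continuous u₁) (hu₁s : HasCompactSupport u₁) (hC : 0 < C)
    (hmass : ∀ x : ℝ, 0 ≤ x →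
      mass W {z | 0 < z.1 ∧ 0 < z.2 ∧ z.1 + z.2 < x} ≤ ENNReal.ofReal (C * (x + 1)))
    (hsol : ∀ t r : ℝ, 0 ≤ t → 0 < r → ENNReal.ofReal (u t r) =
      ENNReal.ofReal (1 / (Real.pi * Real.sqrt 2)) *
        (ENNReal.ofReal ε * (∫⁻ l, ENNReal.ofReal (u₁ l) * kerMass t r l) +
          ∫⁻ z, W z * kerMass (t - z.1) r z.2)) :
    ∃ D : ℝ, 0 < D ∧ ∀ r T : ℝ, 1 ≤ r → r ≤ T →
      ∫⁻ t in Ioo 0 T, ENNReal.ofReal (u t r) ≤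
        ENNReal.ofReal (D * T ^ 3 * Real.exp (-(r / 2))) := by
  have hm := hu₁.measurable
  set w : ℝ → ENNReal := (Ioi 0).indicator
    (fun l => ENNReal.ofReal (Real.sinh l * Real.exp (-(l / 2)))) with hw
  have hwm : Measurable w := Measurable.indicator (by fun_prop) measurableSet_Ioi
  have hfin : ∫⁻ l, ENNReal.ofReal (u₁ l) * w l ≠ ⊤ := by
    have hc : Continuous fun l => u₁ l * (|Real.sinh l| * Real.exp (-(l / 2))) := by
      have := Real.continuous_sinh
      fun_prop
    have hi := (hc.integrable_of_hasCompactSupport (μ := volume) hu₁s.mul_right).lintegral_lt_top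
    refine ne_top_of_le_ne_top hi.ne (lintegral_mono fun l => ?_)
    rw [ENNReal.ofReal_mul' (by positivity)]
    gcongr
    refine (indicator_le fun l _ => ?_ :
      w ≤ fun l => ENNReal.ofReal (|Real.sinh l| * Real.exp (-(l / 2)))) l
    gcongr
    exact le_abs_self _
  set E := (∫⁻ l, ENNReal.ofReal (u₁ l) * w l).toReal with hE
  have hE' : ∫⁻ l, ENNReal.ofReal (u₁ l) * w l = ENNReal.ofReal E :=
    (ENNReal.ofReal_toReal hfin).symm
  have hE0 : 0 ≤ E := ENNReal.toReal_nonneg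
  refine ⟨1 / (Real.pi * Real.sqrt 2) * (|ε| * (120 * E) + 120 * (3 * C)), by positivity,
    fun r T hr hrT => ?_⟩
  have hT : 1 ≤ T := hr.trans hrT
  set k := ENNReal.ofReal (120 * T ^ 2 * Real.exp (-(r / 2))) with hk
  have hA : ∫⁻ t in Ioo 0 T, ∫⁻ l, ENNReal.ofReal (u₁ l) * kerMass t r l ≤
      k * ENNReal.ofReal E := by
    rw [lintegral_lintegral_swap (by simp only [Function.uncurry_def]; fun_prop), ← hE',
      ← lintegral_const_mul' _ _ (by finiteness)]
    refine lintegral_mono fun l => ?_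
    rw [lintegral_const_mul _ (by fun_prop), mul_left_comm]
    gcongr
    simpa using setLIntegral_kerMass_le (τ := 0) (l := l) hr hrT le_rfl
  have hB : ∫⁻ t in Ioo 0 T, ∫⁻ z, W z * kerMass (t - z.1) r z.2 ≤
      k * ENNReal.ofReal (C * (r + T + 1)) := by
    refine le_trans ?_ (mul_le_mul_right (hmass (r + T) (by linarith)) _)
    rw [lintegral_lintegral_swap (by simp only [Function.uncurry_def]; fun_prop), mass,
      ← lintegral_const_mul' _ _ (by finiteness),
      ← lintegral_indicator (by measurability)]
    refine lintegral_mono fun z => ?_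
    rw [lintegral_const_mul _ (by fun_prop)]
    rcases le_or_gt z.1 0 with h1 | h1
    · simp [hW0 z h1]
    rcases le_or_gt (r + T) (z.1 + z.2) with h2 | h2
    · simp [setLIntegral_kerMass_eq_zero h2]
    have h3 := setLIntegral_kerMass_le (l := z.2) hr hrT h1.le
    rcases le_or_gt z.2 0 with h4 | h4
    · simp [kerMass_eq_zero_of_nonpos h4]
    rw [indicator_of_mem (mem_Ioi.2 h4)] at h3
    rw [indicator_of_mem (show z ∈ {z : ℝ × ℝ | 0 < z.1 ∧ 0 < z.2 ∧ z.1 + z.2 < r + T} from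
      ⟨h1, h4, h2⟩), mul_left_comm]
    gcongr
  calc ∫⁻ t in Ioo 0 T, ENNReal.ofReal (u t r)
      = ∫⁻ t in Ioo 0 T, ENNReal.ofReal (1 / (Real.pi * Real.sqrt 2)) *
        (ENNReal.ofReal ε * (∫⁻ l, ENNReal.ofReal (u₁ l) * kerMass t r l) +
          ∫⁻ z, W z * kerMass (t - z.1) r z.2) :=
        setLIntegral_congr_fun measurableSet_Ioo fun t ht => hsol t r ht.1.le (by linarith)
    _ = ENNReal.ofReal (1 / (Real.pi * Real.sqrt 2)) *
        (ENNReal.ofReal ε * (∫⁻ t in Ioo 0 T, ∫⁻ l, ENNReal.ofReal (u₁ l) * kerMass t r l) +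
          ∫⁻ t in Ioo 0 T, ∫⁻ z, W z * kerMass (t - z.1) r z.2) := by
        have hAm : Measurable fun t => ∫⁻ l, ENNReal.ofReal (u₁ l) * kerMass t r l :=
          Measurable.lintegral_prod_right
            (f := fun t l => ENNReal.ofReal (u₁ l) * kerMass t r l)
            (by simp only [Function.uncurry_def]; fun_prop)
        rw [lintegral_const_mul' _ _ (by finiteness), lintegral_add_left (by fun_prop),
          lintegral_const_mul' _ _ (by finiteness)]
    _ ≤ ENNReal.ofReal (1 / (Real.pi * Real.sqrt 2)) *
        (ENNReal.ofReal |ε| * (k * ENNReal.ofReal E) +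
          k * ENNReal.ofReal (C * (r + T + 1))) := by
        gcongr
        exact le_abs_self ε
    _ ≤ _ := by
        rw [hk, ← ENNReal.ofReal_mul (by positivity), ← ENNReal.ofReal_mul (by positivity),
          ← ENNReal.ofReal_mul (by positivity), ← ENNReal.ofReal_add (by positivity)
            (mul_nonneg (by positivity) (mul_nonneg hC.le (by linarith))),
          ← ENNReal.ofReal_mul (by positivity)]
        refine ENNReal.ofReal_le_ofReal ?_
        have h23 : T ^ 2 ≤ T ^ 3 := pow_le_pow_right₀ hT (by norm_num)
        calc _ ≤ 1 / (Real.pi * Real.sqrt 2) * (|ε| * (120 * T ^ 3 * Real.exp (-(r / 2)) * E) +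
              120 * T ^ 2 * Real.exp (-(r / 2)) * (C * (3 * T))) := by
              gcongr
              linarith
          _ = _ := by ring

/-! ### Growth along characteristics -/

lemma one_div_four_le_sinh_mul_exp {l : ℝ} (hl : 1 ≤ l) :
    1 / 4 ≤ Real.sinh l * Real.exp (-l) := by
  have h1 : Real.exp l * Real.exp (-l) = 1 := by rw [← Real.exp_add]; simp
  have h2 : Real.exp (-l) * Real.exp (-l) ≤ 1 / 2 := by
    have h3 : 2 ≤ Real.exp l := by linarith [Real.add_one_le_exp l]
    have h4 := Real.exp_pos (-l)
    nlinarith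
  rw [Real.sinh_eq]
  nlinarith

lemma le_mass_strip {W : ℝ × ℝ → ENNReal} {u : ℝ → ℝ → ℝ} (hW : Measurable W)
    {N g δ : ℝ} (hN : 1 ≤ N) (hg : 0 < g)
    (hgood : ∀ l : ℝ, N ≤ l → l ≤ 2 * N →
      volume (Ioo 0 (3 * N) ∩ {τ | δ ≤ u τ l}) ≤ ENNReal.ofReal (1 / 2))
    (hWlow : ∀ τ l : ℝ, N ≤ l → l ≤ τ → τ < 3 * N → u τ l < δ →
      ENNReal.ofReal (g * u τ l) ≤ W (τ, l))
    {A R h x y : ℝ} (hA : 0 < A) (hR : N ≤ R) (hRN : R + h ≤ 2 * N)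
    (hx : 0 ≤ x) (hxy : x + 1 ≤ y) (hy : y ≤ N)
    (hu : ∀ τ l : ℝ, R ≤ l → x ≤ τ - l → τ - l ≤ y → A * Real.exp (-(l / 2)) ≤ u τ l) :
    ENNReal.ofReal (g * A * h * (y - x) / 8) ≤
      mass W {z | R < z.2 ∧ z.2 < R + h ∧ x < z.1 - z.2 ∧ z.1 - z.2 < y} := by
  set S : Set (ℝ × ℝ) := {z | R < z.2 ∧ z.2 < R + h ∧ x < z.1 - z.2 ∧ z.1 - z.2 < y} with hS
  have hSm : MeasurableSet S := by measurability
  have hxy0 : 0 ≤ y - x := by linarith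
  have hm : Measurable (S.indicator fun z : ℝ × ℝ =>
      W z * ENNReal.ofReal (Real.sinh z.2 * Real.exp (-(z.2 / 2)))) :=
    Measurable.indicator (by fun_prop) hSm
  rw [mass, ← lintegral_indicator hSm, Measure.volume_eq_prod,
    lintegral_prod_symm _ hm.aemeasurable]
  refine le_trans ?_ (setLIntegral_le_lintegral (Ioo R (R + h)) _)
  rw [show g * A * h * (y - x) / 8 = g * A * (1 / 4) * ((y - x) / 2) * h by ring,
    ENNReal.ofReal_mul (by positivity),
    show ENNReal.ofReal h = volume (Ioo R (R + h)) by rw [Real.volume_Ioo]; congr 1; ring,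
    ← setLIntegral_const]
  refine setLIntegral_mono' measurableSet_Ioo fun l hl => ?_
  refine le_trans ?_ (mul_meas_ge_le_lintegral (hm.of_uncurry_right (f := fun a b =>
    S.indicator (fun z : ℝ × ℝ =>
      W z * ENNReal.ofReal (Real.sinh z.2 * Real.exp (-(z.2 / 2)))) (a, b)))
    (ENNReal.ofReal (g * A * (1 / 4))))
  rw [ENNReal.ofReal_mul (by positivity)]
  gcongr
  have hsub : Ioo (l + x) (l + y) \ (Ioo 0 (3 * N) ∩ {τ | δ ≤ u τ l}) ⊆
      {τ | ENNReal.ofReal (g * A * (1 / 4)) ≤ S.indicator (fun z : ℝ × ℝ =>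
        W z * ENNReal.ofReal (Real.sinh z.2 * Real.exp (-(z.2 / 2)))) (τ, l)} := by
    rintro τ ⟨⟨h1, h2⟩, h3⟩
    have hτ : τ < 3 * N := by linarith [hl.2]
    have hδ : u τ l < δ := by
      by_contra! hc
      exact h3 ⟨⟨by linarith [hl.1], hτ⟩, hc⟩
    rw [mem_ofPred_eq, indicator_of_mem (show (τ, l) ∈ S from
      ⟨hl.1, hl.2, by simp only; linarith, by simp only; linarith⟩)]
    have hul := hu τ l hl.1.le (by linarith) (by linarith)
    have hs : 0 ≤ Real.sinh l := Real.sinh_nonneg_iff.2 (by linarith [hl.1])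
    have hq := one_div_four_le_sinh_mul_exp (l := l) (by linarith [hl.1])
    calc ENNReal.ofReal (g * A * (1 / 4))
        ≤ ENNReal.ofReal ((g * u τ l) * (Real.sinh l * Real.exp (-(l / 2)))) := by
          refine ENNReal.ofReal_le_ofReal ?_
          calc g * A * (1 / 4) ≤ g * A * (Real.sinh l * Real.exp (-l)) := by gcongr
            _ = g * (A * Real.exp (-(l / 2))) * (Real.sinh l * Real.exp (-(l / 2))) := by
              rw [show -l = -(l / 2) + -(l / 2) by ring, Real.exp_add]; ring
            _ ≤ _ := by gcongr
      _ = ENNReal.ofReal (g * u τ l) * ENNReal.ofReal (Real.sinh l * Real.exp (-(l / 2))) :=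
          ENNReal.ofReal_mul' (by positivity)
      _ ≤ _ := by
          gcongr
          exact hWlow τ l (by linarith [hl.1]) (by linarith) hτ hδ
  refine le_trans ?_ (measure_mono hsub)
  refine le_trans ?_ le_measure_sdiff
  rw [Real.volume_Ioo]
  refine le_trans ?_ (tsub_le_tsub_left
    (hgood l (by linarith [hl.1]) (by linarith [hl.2])) _)
  rw [← ENNReal.ofReal_sub _ (by norm_num)]
  exact ENNReal.ofReal_le_ofReal (by linarith)

lemma growth_step {W : ℝ × ℝ → ENNReal} {u : ℝ → ℝ → ℝ} (hd : DominatesMass W u)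
    {N g A R h x y : ℝ} (hN : 1 ≤ N) (hg : 0 < g) (hA : 0 < A) (hR : N ≤ R) (hh : 0 < h)
    (hx : 0 ≤ x) (hxy : x + 1 ≤ y)
    (hmass : ENNReal.ofReal (g * A * h * (y - x) / 8) ≤
      mass W {z | R < z.2 ∧ z.2 < R + h ∧ x < z.1 - z.2 ∧ z.1 - z.2 < y})
    {t r : ℝ} (hr : R + h ≤ r) (hyt : y ≤ t - r) (htN : t - r ≤ N) :
    massConst * (g * A * h * (y - x) / 8) * Real.exp (-(r / 2)) ≤ u t r := by
  have hc := massConst_pos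
  have hxy0 : 0 < y - x := by linarith
  refine le_of_ofReal_le (by positivity) ?_
  refine le_trans ?_ (hd t r r _ (by linarith) (by linarith) (by measurability :
    MeasurableSet {z : ℝ × ℝ | R < z.2 ∧ z.2 < R + h ∧ x < z.1 - z.2 ∧ z.1 - z.2 < y})
    fun z ⟨h1, h2, h3, h4⟩ => ⟨by linarith, abs_lt.2 ⟨by linarith, by linarith⟩,
      by linarith, le_rfl⟩)
  refine le_trans (le_of_eq ?_) (mul_le_mul_right hmass _)
  rw [← ENNReal.ofReal_mul (by positivity)]
  congr 1; ring

lemma le_mass_of_growth {W : ℝ × ℝ → ENNReal} {u : ℝ → ℝ → ℝ} (hd : DominatesMass W u)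
    (hW : Measurable W) {N g δ h A : ℝ} {n : ℕ} (hNh : N = (n + 2) * h) (hh : 1 ≤ h)
    (hg : 0 < g) (hA : 0 < A)
    (hgood : ∀ l : ℝ, N ≤ l → l ≤ 2 * N →
      volume (Ioo 0 (3 * N) ∩ {τ | δ ≤ u τ l}) ≤ ENNReal.ofReal (1 / 2))
    (hWlow : ∀ τ l : ℝ, N ≤ l → l ≤ τ → τ < 3 * N → u τ l < δ →
      ENNReal.ofReal (g * u τ l) ≤ W (τ, l))
    (hbase : ∀ t r : ℝ, N ≤ r → 0 ≤ t - r → t - r ≤ 1 → A * Real.exp (-(r / 2)) ≤ u t r) :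
    ENNReal.ofReal (g * (massConst * (g * h / 8) * A * (massConst * (g * h ^ 2 / 8)) ^ n) *
      h ^ 2 / 8) ≤ mass W {z | 0 < z.1 ∧ 0 < z.2 ∧ z.1 + z.2 < 5 * N} := by
  have hc := massConst_pos
  have hn0 : (0 : ℝ) ≤ n := n.cast_nonneg
  have hN2 : 2 * h ≤ N := by rw [hNh]; nlinarith
  have key : ∀ j : ℕ, j ≤ n → ∀ t r : ℝ, N + (j + 1) * h ≤ r → (j + 1) * h ≤ t - r →
      t - r ≤ N → massConst * (g * h / 8) * A * (massConst * (g * h ^ 2 / 8)) ^ j *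
        Real.exp (-(r / 2)) ≤ u t r := by
    intro j
    induction j with
    | zero =>
      intro _ t r h1 h2 h3
      rw [Nat.cast_zero, zero_add, one_mul] at h1 h2
      have := growth_step hd (by linarith) hg hA le_rfl (by linarith) le_rfl
        (le_of_eq (zero_add 1))
        (le_mass_strip hW (by linarith) hg hgood hWlow hA le_rfl (h := h) (by linarith)
          le_rfl (le_of_eq (zero_add 1)) (by linarith) hbase)
        h1 (by linarith) h3
      refine le_trans (le_of_eq ?_) this
      ring
    | succ j ih =>
      intro hj t r h1 h2 h3
      have hj' : (j : ℝ) + 1 ≤ n := by exact_mod_cast hj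
      have hj0 : (0 : ℝ) ≤ j := j.cast_nonneg
      have hjN : (j + 2) * h ≤ N := by rw [hNh]; nlinarith
      have hjh : 0 ≤ j * h := by positivity
      push_cast at h1 h2
      have := growth_step hd (y := (j + 2) * h) (by linarith) hg (by positivity)
        (by linarith : N ≤ N + (j + 1) * h) (by linarith : 0 < h)
        (by positivity) (by linarith)
        (le_mass_strip hW (by linarith) hg hgood hWlow (by positivity)
          (by linarith : N ≤ N + (j + 1) * h) (h := h) (by linarith)
          (by positivity) (by linarith) (by linarith)
          (fun τ l g1 g2 g3 => ih (by omega) τ l g1 g2 (by linarith)))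
        (by linarith) (by linarith) h3
      refine le_trans (le_of_eq ?_) this
      ring
  have hnh : 0 ≤ n * h := by positivity
  have := le_mass_strip hW (by linarith) hg hgood hWlow (by positivity)
    (by linarith : N ≤ N + (n + 1) * h) (h := h) (x := (n + 1) * h) (y := N) (by linarith)
    (by positivity) (by linarith) le_rfl (key n le_rfl)
  refine le_trans (le_of_eq ?_) (this.trans (mass_mono W fun z ⟨h1, h2, h3, h4⟩ => ?_))
  · congr 1
    rw [show N - (n + 1) * h = h by rw [hNh]; ring]
    ring
  · exact ⟨by linarith, by linarith, by linarith⟩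

/-- Eventually, the source dominates the linear lower bound in the weakly nonlinear regime. -/
lemma source_lower_bound {F : ℝ → ℝ} {δ p c v T t : ℝ} (hp : 1 < p) (hδ : 0 < δ)
    (hδ1 : δ < 1)
    (hF : ∀ x : ℝ, 0 < |x| → |x| < δ → F x ≥ δ * Real.log (1 / |x|) ^ (1 - p) * |x|)
    (hc : 0 < c) (ht : 2 * Real.log (1 / c) ≤ t) (htT : t ≤ T)
    (hv : c * Real.exp (-(t / 2)) ≤ v) (hvδ : v < δ) :
    δ * T ^ (1 - p) * v ≤ F v := by
  have hv0 : 0 < v := lt_of_lt_of_le (by positivity) hv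
  have h := hF v (abs_pos.2 hv0.ne') (by rwa [abs_of_pos hv0])
  rw [abs_of_pos hv0] at h
  have hl0 : 0 < Real.log (1 / v) := Real.log_pos (by rw [lt_div_iff₀ hv0]; linarith)
  have hl1 : Real.log (1 / v) ≤ T := by
    have h1 := Real.log_le_log (by positivity) hv
    rw [Real.log_mul hc.ne' (Real.exp_pos _).ne', Real.log_exp] at h1
    rw [one_div, Real.log_inv] at ht ⊢
    linarith
  refine le_trans ?_ h
  have := Real.rpow_le_rpow_of_nonpos hl0 hl1 (by linarith : 1 - p ≤ 0)
  gcongr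

lemma exists_volume_large_le {u : ℝ → ℝ → ℝ} {D δ : ℝ} (hδ : 0 < δ)
    (hu : ContinuousOn (Function.uncurry u) (Ici 0 ×ˢ Ici 0))
    (hD : ∀ r T : ℝ, 1 ≤ r → r ≤ T → ∫⁻ t in Ioo 0 T, ENNReal.ofReal (u t r) ≤
      ENNReal.ofReal (D * T ^ 3 * Real.exp (-(r / 2)))) (hD0 : 0 < D) :
    ∀ᶠ N : ℝ in Filter.atTop, ∀ l : ℝ, N ≤ l → l ≤ 2 * N →
      volume (Ioo 0 (3 * N) ∩ {τ | δ ≤ u τ l}) ≤ ENNReal.ofReal (1 / 2) := by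
  have hlim : Filter.Tendsto (fun N : ℝ => 216 * D * ((N / 2) ^ 3 * Real.exp (-(N / 2))))
      Filter.atTop (nhds (216 * D * 0)) :=
    ((Real.tendsto_pow_mul_exp_neg_atTop_nhds_zero 3).comp
      (Filter.tendsto_id.atTop_div_const two_pos)).const_mul _
  rw [mul_zero] at hlim
  filter_upwards [hlim.eventually_lt_const (half_pos hδ), Filter.eventually_ge_atTop 1]
    with N hN hN1 l hl hl2
  have hc : ContinuousOn (fun τ => u τ l) (Ioo 0 (3 * N)) :=
    hu.comp (f := fun τ => (τ, l)) (by fun_prop)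
      fun τ hτ => ⟨mem_Ici.2 hτ.1.le, mem_Ici.2 (by linarith)⟩
  have hM := mul_meas_ge_le_lintegral₀
    (hc.aemeasurable (μ := volume) measurableSet_Ioo).ennreal_ofReal (ENNReal.ofReal δ)
  rw [Measure.restrict_apply' measurableSet_Ioo] at hM
  have hδ0 : ENNReal.ofReal δ ≠ 0 := (ENNReal.ofReal_pos.2 hδ).ne'
  refine (ENNReal.mul_le_mul_iff_right hδ0 ENNReal.ofReal_ne_top).1 ?_
  calc ENNReal.ofReal δ * volume (Ioo 0 (3 * N) ∩ {τ | δ ≤ u τ l})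
      ≤ ENNReal.ofReal δ *
          volume ({τ | ENNReal.ofReal δ ≤ ENNReal.ofReal (u τ l)} ∩ Ioo 0 (3 * N)) := by
        refine mul_le_mul_right (measure_mono ?_) _
        exact fun τ hτ => ⟨ENNReal.ofReal_le_ofReal hτ.2, hτ.1⟩
    _ ≤ _ := hM
    _ ≤ _ := hD l (3 * N) (by linarith) (by linarith)
    _ ≤ ENNReal.ofReal (δ * (1 / 2)) := by
        refine ENNReal.ofReal_le_ofReal ?_
        have he : Real.exp (-(l / 2)) ≤ Real.exp (-(N / 2)) := by gcongr
        calc _ ≤ D * (3 * N) ^ 3 * Real.exp (-(N / 2)) := by gcongr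
          _ = 216 * D * ((N / 2) ^ 3 * Real.exp (-(N / 2))) := by ring
          _ ≤ _ := by linarith
    _ = _ := ENNReal.ofReal_mul hδ.le

theorem blow_up_in_finite_time (p q : ℝ) (hp1 : 1 < p) (hp3 : p < 3) (hq : 1 < q)
    (F : ℝ → ℝ) (hF : ContDiff ℝ 1 F) (hFnn : ∀ u : ℝ, 0 ≤ F u)
    (hF0 : F 0 = 0) (hF0' : deriv F 0 = 0)
    (δ₀ : ℝ) (hδ₀pos : 0 < δ₀) (hδ₀lt : δ₀ < 1)
    (hFsmall : ∀ u : ℝ, 0 < |u| → |u| < δ₀ →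
      F u ≥ δ₀ * Real.log (1 / |u|) ^ (1 - p) * |u|)
    (hFlarge : ∀ u : ℝ, 1 / δ₀ < |u| → F u ≥ δ₀ * |u| ^ q)
    (τ₀ : ℝ) (hτ₀ : 0 < τ₀)
    (u₁ : ℝ → ℝ) (hu₁c : Continuous u₁) (hu₁nn : ∀ l : ℝ, 0 ≤ u₁ l)
    (hu₁supp : HasCompactSupport u₁)
    (hu₁ge : ∀ l ∈ Set.Icc τ₀ (3 * τ₀), 1 ≤ u₁ l)
    (ε : ℝ) (hε : 0 < ε) :
    ¬ ∃ u : ℝ → ℝ → ℝ,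
      ContinuousOn (Function.uncurry u) (Set.Ici 0 ×ˢ Set.Ici 0) ∧
      ∀ t : ℝ, 0 ≤ t → ∀ r : ℝ, 0 < r →
        u t r = ε * Isol t r u₁ +
          ∫ τ in (0 : ℝ)..t, Isol (t - τ) r (fun l => F (u τ l)) := by
  rintro ⟨u, hu, heq⟩
  set W : ℝ × ℝ → ENNReal := fun z => ENNReal.ofReal (source F u z) with hWdef
  have hW : Measurable W := (measurable_source hF.continuous hu).ennreal_ofReal
  have hWpos : ∀ τ l : ℝ, 0 < τ → 0 < l → W (τ, l) = ENNReal.ofReal (F (u τ l)) :=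
    fun τ l hτ hl => by simp only [hWdef, source_of_pos hτ hl]
  have hW0 : ∀ z : ℝ × ℝ, z.1 ≤ 0 → W z = 0 := fun z hz => by
    simp [hWdef, source_eq_zero hz]
  have hsol : ∀ t r : ℝ, 0 ≤ t → 0 < r → ENNReal.ofReal (u t r) =
      ENNReal.ofReal (1 / (Real.pi * Real.sqrt 2)) *
        (ENNReal.ofReal ε * (∫⁻ l, ENNReal.ofReal (u₁ l) * kerMass t r l) +
          ∫⁻ z, W z * kerMass (t - z.1) r z.2) :=
    fun t r ht hr => ofReal_solution hF.continuous hFnn hu hu₁c hu₁nn hε heq ht hr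
  have hd : DominatesMass W u := dominatesMass_of_le fun t r ht hr => by
    rw [hsol t r ht hr]
    gcongr
    exact le_add_self
  obtain ⟨c, hc, hlin⟩ := exists_linear_lower_bound (u := u) hε hτ₀ hu₁ge fun t r ht hr => by
    rw [hsol t r ht hr]
    gcongr
    exact le_self_add
  obtain ⟨C, hC, hmass⟩ := exists_mass_le hd hWpos hδ₀pos hq hFlarge
  obtain ⟨D, hD0, hD⟩ := exists_lintegral_solution_le hW hW0 hu₁c hu₁supp hC hmass hsol
  have hp : 0 < 3 - p := by linarith
  obtain ⟨n, hn⟩ := exists_nat_gt (2 / (3 - p))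
  rw [div_lt_iff₀ hp] at hn
  have hn0 : (0 : ℝ) ≤ n := n.cast_nonneg
  set s := (3 - p) * (n + 2) - 2 with hs
  have hs0 : 0 < s := by nlinarith
  set A := c * Real.exp (-(1 / 2)) with hA
  have hk := massConst_pos
  set b := massConst * (δ₀ * (3 * (n + 2)) ^ (1 - p)) / 8 with hb
  have hb0 : 0 < b := by positivity
  have hNtop : Filter.Tendsto (fun h : ℝ => (n + 2) * h) Filter.atTop Filter.atTop :=
    Filter.tendsto_id.const_mul_atTop (by positivity)
  obtain ⟨h, ⟨⟨⟨hgood, hlog⟩, hτN⟩, hh⟩, hbig⟩ :=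
    ((((hNtop.eventually (exists_volume_large_le hδ₀pos hu hD hD0)).and
      (hNtop.eventually_ge_atTop (2 * Real.log (1 / c)))).and
      (hNtop.eventually_gt_atTop (3 * τ₀))).and (Filter.eventually_ge_atTop (1 : ℝ))).and
      ((tendsto_rpow_atTop hs0).eventually_gt_atTop
        (C * massConst * (5 * (n + 2) + 1) / (A * b ^ (n + 2)))) |>.exists
  have hh0 : 0 < h := by linarith
  set N := (n + 2) * h with hN
  have hN0 : 0 < N := by positivity
  set g := δ₀ * (3 * N) ^ (1 - p) with hg
  have hg0 : 0 < g := by positivity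
  have hlow := le_mass_of_growth hd hW hN hh hg0 (A := A) (by positivity) hgood
    (fun τ l h1 h2 h3 h4 => by
      rw [hWpos τ l (by linarith) (by linarith)]
      exact ENNReal.ofReal_le_ofReal (source_lower_bound hp1 hδ₀pos hδ₀lt hFsmall hc
        (by linarith) h3.le (hlin τ l (by linarith) (by linarith) h2) h4))
    (fun t r h1 h2 h3 => by
      refine le_trans ?_ (hlin t r (by linarith) (by linarith) (by linarith))
      rw [hA, mul_assoc, ← Real.exp_add]
      gcongr
      linarith)
  have hle := hlow.trans (hmass (5 * N) (by positivity))
  rw [ENNReal.ofReal_le_ofReal_iff (by positivity)] at hle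
  have hbh : massConst * (g * h ^ 2 / 8) = b * h ^ (3 - p) := by
    rw [hg, hb, hN, ← mul_assoc 3, Real.mul_rpow (by positivity) hh0.le,
      show 3 - p = (1 - p) + (2 : ℕ) by push_cast; ring, Real.rpow_add_natCast hh0.ne']
    ring
  have hpow : (b * h ^ (3 - p)) ^ (n + 2) = b ^ (n + 2) * (h ^ s * h ^ 2) := by
    rw [mul_pow, ← Real.rpow_mul_natCast hh0.le, ← Real.rpow_add_natCast hh0.ne', hs]
    congr 2
    push_cast; ring
  have hfin : A * b ^ (n + 2) * h ^ s * h ^ 2 ≤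
      C * massConst * (5 * (n + 2) + 1) * h ^ 2 := by
    calc A * b ^ (n + 2) * h ^ s * h ^ 2 = A * (b * h ^ (3 - p)) ^ (n + 2) := by
          rw [hpow]; ring
      _ = g * (massConst * (g * h / 8) * A * (massConst * (g * h ^ 2 / 8)) ^ n) *
          h ^ 2 / 8 * (massConst * h) := by
          rw [pow_add, ← hbh]; ring
      _ ≤ C * (5 * N + 1) * (massConst * h) := by gcongr
      _ ≤ C * (5 * N + h) * (massConst * h) := by gcongr
      _ = _ := by rw [hN]; ring
  rw [div_lt_iff₀ (by positivity)] at hbig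
  have := le_of_mul_le_mul_right hfin (by positivity)
  linarith
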